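/- Under the inductive hypothesis of the μ-case, the game values of the unfolded game are fixed points: Let ⟨P, {→a}_{a∈L}⟩ be a PLTS, and let G₁ be a pLμ formula and X a variable such that μX.G₁ is in normal form. Assume that for every interpretation ρ' : Var → (P → [0,1]) and every q ∈ P, ⟦G₁⟧ρ'(q) = Val↓(𝒢^{G₁}_{ρ'})(⟨q,G₁⟩) = Val↑(𝒢^{G₁}_{ρ'})(⟨q,G₁⟩). For ⋆ ∈ {↓,↑} define ⦅μX.G₁⦆⋆_ρ : P → [0,1] by p ↦ Val⋆(𝒢^{μX.G₁}_ρ)(⟨p,G₁⟩). Then for every interpretation ρ, both ⦅μX.G₁⦆↓_ρ and ⦅μX.G₁⦆↑_ρ are fixed points of the map f ↦ ⟦G₁⟧ρ[f/X] on P → [0,1]; consequently ⟦μX.G₁⟧ρ(p) ≤ ⦅μX.G₁⦆↓_ρ(p) ≤ ⦅μX.G₁⦆↑_ρ(p) for every p ∈ P. -/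

import Mathlib

noncomputable section

open scoped unitInterval Classical

instance : Fact ((0:ℝ) ≤ 1) := ⟨zero_le_one⟩

/-- A discrete probability distribution on `X`: a `[0,1]`-valued (indeed nonnegative)
function summing to `1` (hence with countable support). -/
structure PDist (X : Type) where
  f : X → ℝ
  nonneg : ∀ x, 0 ≤ f x
  sum_one : HasSum f 1

/-- A probabilistic labeled transition system over labels `L` with states `P`:
for each label `a` and state `p`, the set of distributions `d` with `p →a d`. -/
structure PLTS (L P : Type) where
  trans : L → P → Set (PDist P)

/-- Formulas of the probabilistic modal μ-calculus, with variables drawn from `ℕ`. -/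
inductive pLmu (L : Type) : Type
  | var : ℕ → pLmu L
  | dia : L → pLmu L → pLmu L
  | box : L → pLmu L → pLmu L
  | or  : pLmu L → pLmu L → pLmu L
  | and : pLmu L → pLmu L → pLmu L
  | mu  : ℕ → pLmu L → pLmu L
  | nu  : ℕ → pLmu L → pLmu L

namespace pLmu

variable {L P : Type}

/-- free variables -/
def freeVars : pLmu L → Set ℕ
  | .var X => {X}
  | .dia _ G => freeVars G
  | .box _ G => freeVars G
  | .or G H => freeVars G ∪ freeVars H
  | .and G H => freeVars G ∪ freeVars H
  | .mu X G => freeVars G \ {X}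
  | .nu X G => freeVars G \ {X}

/-- the list of variables bound by the μ- and ν-binders occurring in a formula -/
def binders : pLmu L → List ℕ
  | .var _ => []
  | .dia _ G => binders G
  | .box _ G => binders G
  | .or G H => binders G ++ binders H
  | .and G H => binders G ++ binders H
  | .mu X G => X :: binders G
  | .nu X G => X :: binders G

/-- A formula is in normal form if every binder binds a distinct variable and no
variable occurs both free and bound. -/
def NormalForm (F : pLmu L) : Prop :=
  F.binders.Nodup ∧ ∀ X ∈ F.binders, X ∉ F.freeVars

/-- A formula is closed if it has no free variables. -/
def Closed (F : pLmu L) : Prop := F.freeVars = ∅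

/-- The expected value of `g : P → [0,1]` under a distribution `d` on `P`
(the real number `∑ q, d(q) · g(q)`, which lies in `[0,1]`, viewed in `[0,1]`). -/
def distExp (d : PDist P) (g : P → unitInterval) : unitInterval :=
  Set.projIcc 0 1 zero_le_one (∑' q, d.f q * (g q : ℝ))

/-- The denotational semantics `⟦F⟧ρ : P → [0,1]` of a pLμ formula, where least
(resp. greatest) fixed points are given, à la Knaster–Tarski, as the infimum of
prefixed points (resp. supremum of postfixed points) in the complete lattice `P → [0,1]`. -/
def sem (M : PLTS L P) : pLmu L → (ℕ → P → unitInterval) → P → unitInterval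
  | .var X, ρ, p => ρ X p
  | .dia a G, ρ, p => sSup ((fun d => distExp d (sem M G ρ)) '' M.trans a p)
  | .box a G, ρ, p => sInf ((fun d => distExp d (sem M G ρ)) '' M.trans a p)
  | .or G H, ρ, p => sem M G ρ p ⊔ sem M H ρ p
  | .and G H, ρ, p => sem M G ρ p ⊓ sem M H ρ p
  | .mu X G, ρ, p => sInf {g : P → unitInterval | sem M G (Function.update ρ X g) ≤ g} p
  | .nu X G, ρ, p => sSup {g : P → unitInterval | g ≤ sem M G (Function.update ρ X g)} p

end pLmu

noncomputable section

open scoped unitInterval Classical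

/-- The three agents of a 2½-player game. -/
inductive Player : Type
  | one : Player
  | two : Player
  | nature : Player
deriving DecidableEq

/-- A 2½-player arena: a directed graph `(S, E)`, an assignment of states to the
players (Player 1, Player 2, Nature), and probabilistic transition data at Nature
states. -/
structure Arena (S : Type) where
  E : S → Set S
  owner : S → Player
  prob : S → S → ℝ

namespace Arena

variable {S : Type}

/-- Well-formedness: at every Nature state `s`, `prob s` is a probability
distribution whose support is exactly the set `E s` of successors of `s`. -/
def Wellformed (A : Arena S) : Prop :=
  ∀ s, A.owner s = Player.nature →
    (∀ t, 0 ≤ A.prob s t) ∧ HasSum (A.prob s) 1 ∧ A.E s = Function.support (A.prob s)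

/-- `s` is a terminal state if it has no successors. -/
def Terminal (A : Arena S) (s : S) : Prop := A.E s = ∅

end Arena

/-- An (unbounded memory deterministic) strategy for player `pl` in arena `A`:
given the history `hist` and the current state `s` (a non-terminal state owned by
`pl`), it picks a successor of `s`. -/
structure Strategy {S : Type} (A : Arena S) (pl : Player) where
  next : List S → S → S
  valid : ∀ (hist : List S) (s : S), A.owner s = pl → A.E s ≠ ∅ → next hist s ∈ A.E s

variable {S : Type}

/-- The Markov chain determined by a strategy profile `(σ1, σ2)` and initial state
`s0`: the tree of finite paths from `s0` in which nodes ending in a Player 1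
(resp. Player 2) state are extended uniquely according to `σ1` (resp. `σ2`), nodes
ending in a Nature state branch fully over the successors, and (for the purpose of
encoding finite completed paths as infinite sequences) nodes ending in a terminal
state are extended by repeating the terminal state. -/
inductive MC (A : Arena S) (σ1 : Strategy A Player.one) (σ2 : Strategy A Player.two)
    (s0 : S) : List S → Prop
  | root : MC A σ1 σ2 s0 [s0]
  | one (l : List S) (s : S) : MC A σ1 σ2 s0 (l ++ [s]) → A.owner s = Player.one →
      A.E s ≠ ∅ → MC A σ1 σ2 s0 (l ++ [s, σ1.next l s])
  | two (l : List S) (s : S) : MC A σ1 σ2 s0 (l ++ [s]) → A.owner s = Player.two →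
      A.E s ≠ ∅ → MC A σ1 σ2 s0 (l ++ [s, σ2.next l s])
  | nature (l : List S) (s t : S) : MC A σ1 σ2 s0 (l ++ [s]) →
      A.owner s = Player.nature → t ∈ A.E s → MC A σ1 σ2 s0 (l ++ [s, t])
  | term (l : List S) (s : S) : MC A σ1 σ2 s0 (l ++ [s]) → A.E s = ∅ →
      MC A σ1 σ2 s0 (l ++ [s, s])

/-- The space of completed paths, encoded as infinite sequences of states
(a finite completed path, i.e. one ending in a terminal state, is encoded by
repeating its terminal state forever). -/
def PathSpace (S : Type) : Type := ℕ → S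

instance : MeasurableSpace (PathSpace S) :=
  @MeasurableSpace.pi ℕ (fun _ => S) (fun _ => ⊤)

/-- The basic cylinder set of completed paths extending a finite path. -/
def cyl (l : List S) : Set (PathSpace S) :=
  {u | ∀ i : Fin l.length, u i = l.get i}

/-- the probability of a single step -/
def stepProb (A : Arena S) (s t : S) : ℝ :=
  if A.owner s = Player.nature then A.prob s t else 1

/-- The product of the probabilities of the Nature steps along a finite path. -/
def pathProb (A : Arena S) : List S → ℝ
  | [] => 1
  | [_] => 1
  | s :: t :: l => stepProb A s t * pathProb A (t :: l)

/-- The weight assigned to a basic cylinder: the product of the probabilities of its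
Nature steps if the underlying finite path belongs to the Markov chain, `0` otherwise. -/
def cylWeight (A : Arena S) (σ1 : Strategy A Player.one) (σ2 : Strategy A Player.two)
    (s0 : S) (l : List S) : ℝ :=
  if MC A σ1 σ2 s0 l then pathProb A l else 0

/-- The Borel probability measure on completed paths induced by the Markov chain
`M^{s0}_{σ1,σ2}`: the unique probability measure assigning to every basic cylinder
its weight. -/
def pathMeasure (A : Arena S) (σ1 : Strategy A Player.one) (σ2 : Strategy A Player.two)
    (s0 : S) : MeasureTheory.Measure (PathSpace S) :=
  if h : ∃ μ : MeasureTheory.Measure (PathSpace S), MeasureTheory.IsProbabilityMeasure μ ∧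
      ∀ l : List S, l ≠ [] → μ (cyl l) = ENNReal.ofReal (cylWeight A σ1 σ2 s0 l)
  then h.choose else 0

/-- The payoff function induced by a parity structure `(pri, R)`: a completed path
reaching a terminal state gets the reward `R` of (the first occurrence of) that
terminal state; an infinite path gets `1` if the greatest priority occurring
infinitely often along it is even, and `0` otherwise. -/
def payoff (A : Arena S) (pri : S → ℕ) (R : S → ℝ) (u : PathSpace S) : ℝ :=
  if h : ∃ i, A.E (u i) = ∅ then R (u (Nat.find h))
  else if Even (sSup {n | {i | pri (u i) = n}.Infinite}) then 1 else 0

/-- The expected reward of Player 1 for the Markov chain `M^{s0}_{σ1,σ2}`: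
the integral of the payoff against the induced probability measure on paths. -/
def expReward (A : Arena S) (pri : S → ℕ) (R : S → ℝ) (σ1 : Strategy A Player.one)
    (σ2 : Strategy A Player.two) (s0 : S) : ℝ :=
  ∫ u, payoff A pri R u ∂(pathMeasure A σ1 σ2 s0)

/-- The lower value `Val↓` of the 2½-player parity game `⟨A, Φ_(pri,R)⟩`. -/
def lowerValue (A : Arena S) (pri : S → ℕ) (R : S → ℝ) (s : S) : ℝ :=
  ⨆ σ1 : Strategy A Player.one, ⨅ σ2 : Strategy A Player.two, expReward A pri R σ1 σ2 s

/-- The upper value `Val↑` of the 2½-player parity game `⟨A, Φ_(pri,R)⟩`. -/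
def upperValue (A : Arena S) (pri : S → ℕ) (R : S → ℝ) (s : S) : ℝ :=
  ⨅ σ2 : Strategy A Player.two, ⨆ σ1 : Strategy A Player.one, expReward A pri R σ1 σ2 s

/-- The Bellman functional `𝓕` on `S → ℝ` associated to the game `⟨A, Φ_(pri,R)⟩`. -/
def bellman (A : Arena S) (R : S → ℝ) (f : S → ℝ) : S → ℝ := fun s =>
  if A.E s = ∅ then R s
  else match A.owner s with
    | Player.one => sSup (f '' A.E s)
    | Player.two => sInf (f '' A.E s)
    | Player.nature => ∑' t : A.E s, A.prob s t * f t
namespace pLmu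

variable {L P : Type}

/-- the number of connectives of a formula -/
def size : pLmu L → ℕ
  | .var _ => 1
  | .dia _ G => size G + 1
  | .box _ G => size G + 1
  | .or G H => size G + size H + 1
  | .and G H => size G + size H + 1
  | .mu _ G => size G + 1
  | .nu _ G => size G + 1

/-- `varInfo F d X` looks up the (leftmost outermost) binder binding `X` in `F`,
returning `some (d', b)` where `d'` is the depth (starting from `d`) at which the
binder occurs and `b` is `true` for a μ-binder and `false` for a ν-binder, and
`none` if `X` is not bound in `F`. -/
def varInfo : pLmu L → ℕ → ℕ → Option (ℕ × Bool)
  | .var _, _, _ => none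
  | .dia _ G, d, X => varInfo G (d+1) X
  | .box _ G, d, X => varInfo G (d+1) X
  | .or G H, d, X => (varInfo G (d+1) X).orElse (fun _ => varInfo H (d+1) X)
  | .and G H, d, X => (varInfo G (d+1) X).orElse (fun _ => varInfo H (d+1) X)
  | .mu Y G, d, X => if Y = X then some (d, true) else varInfo G (d+1) X
  | .nu Y G, d, X => if Y = X then some (d, false) else varInfo G (d+1) X

/-- `bodyOf F X` is the body of the (leftmost outermost) binder binding `X` in `F`,
if any. -/
def bodyOf : pLmu L → ℕ → Option (pLmu L)
  | .var _, _ => none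
  | .dia _ G, X => bodyOf G X
  | .box _ G, X => bodyOf G X
  | .or G H, X => (bodyOf G X).orElse (fun _ => bodyOf H X)
  | .and G H, X => (bodyOf G X).orElse (fun _ => bodyOf H X)
  | .mu Y G, X => if Y = X then some G else bodyOf G X
  | .nu Y G, X => if Y = X then some G else bodyOf G X

end pLmu

/-- The states of the game `𝒢^F_ρ`: pairs of a process state or a distribution on
process states, and a (sub)formula. -/
abbrev GState (L P : Type) : Type := (P ⊕ PDist P) × pLmu L

/-- The arena of the 2½-player parity game `𝒢^F_ρ` associated to a PLTS `M`
and a formula `F`. -/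
def gameArena (M : PLTS L P) (F : pLmu L) : Arena (GState L P) where
  E := fun s =>
    match s with
    | (Sum.inl p, .var X) =>
        match pLmu.bodyOf F X with
        | some H => {((Sum.inl p : P ⊕ PDist P), H)}
        | none => ∅
    | (Sum.inl p, .dia a G) => (fun d => ((Sum.inr d : P ⊕ PDist P), G)) '' M.trans a p
    | (Sum.inl p, .box a G) => (fun d => ((Sum.inr d : P ⊕ PDist P), G)) '' M.trans a p
    | (Sum.inl p, .or G H) => {((Sum.inl p : P ⊕ PDist P), G), ((Sum.inl p : P ⊕ PDist P), H)}
    | (Sum.inl p, .and G H) => {((Sum.inl p : P ⊕ PDist P), G), ((Sum.inl p : P ⊕ PDist P), H)}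
    | (Sum.inl p, .mu _ G) => {((Sum.inl p : P ⊕ PDist P), G)}
    | (Sum.inl p, .nu _ G) => {((Sum.inl p : P ⊕ PDist P), G)}
    | (Sum.inr d, G) => (fun q => ((Sum.inl q : P ⊕ PDist P), G)) '' Function.support d.f
  owner := fun s =>
    match s with
    | (Sum.inl _, .var X) =>
        match pLmu.varInfo F 0 X with
        | some (_, true) => Player.one
        | some (_, false) => Player.two
        | none => Player.one
    | (Sum.inl _, .dia _ _) => Player.one
    | (Sum.inl _, .box _ _) => Player.two
    | (Sum.inl _, .or _ _) => Player.one
    | (Sum.inl _, .and _ _) => Player.two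
    | (Sum.inl _, .mu _ _) => Player.one
    | (Sum.inl _, .nu _ _) => Player.two
    | (Sum.inr _, _) => Player.nature
  prob := fun s t =>
    match s, t with
    | (Sum.inr d, G), (Sum.inl q, G') => if G' = G then d.f q else 0
    | _, _ => 0

/-- The priority assignment of the game `𝒢^F_ρ`: a state `⟨p, X⟩` with `X` bound
in `F` at binder depth `d` gets the positive priority `2(|F| - d) + 1` if `X` is a
μ-variable and `2(|F| - d)` if `X` is a ν-variable (so that μ-variables get odd and
ν-variables get even priorities, and variables subsuming others get greater
priorities); all other states get priority `0`. -/
def gamePri (F : pLmu L) : GState L P → ℕ := fun s =>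
  match s with
  | (Sum.inl _, .var X) =>
      match pLmu.varInfo F 0 X with
      | some (d, true) => 2 * (F.size - d) + 1
      | some (d, false) => 2 * (F.size - d)
      | none => 0
  | _ => 0

/-- The terminal reward assignment of the game `𝒢^F_ρ`: a terminal state `⟨p, X⟩`
(with `X` free in `F`) gets reward `ρ(X)(p)`; a terminal state `⟨p, ⟨a⟩G⟩` gets
reward `0` and a terminal state `⟨p, [a]G⟩` gets reward `1`. -/
def gameR (F : pLmu L) (ρ : ℕ → P → unitInterval) : GState L P → ℝ := fun s =>
  match s with
  | (Sum.inl p, .var X) => (ρ X p : ℝ)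
  | (Sum.inl _, .dia _ _) => 0
  | (Sum.inl _, .box _ _) => 1
  | _ => 0

/-! ### Tree weights and measures on path space -/

open MeasureTheory in
theorem mS_path : (inferInstance : MeasurableSpace (PathSpace S)) =
    @MeasurableSpace.pi ℕ (fun _ => S) (fun _ => ⊤) := rfl

/-- finite prefix of a path -/
def pre (u : PathSpace S) (n : ℕ) : List S := (List.range n).map (fun i => u i)

theorem pre_succ (u : PathSpace S) (n : ℕ) : pre u (n+1) = pre u n ++ [u n] := by
  simp [pre, List.range_succ]

theorem pre_length (u : PathSpace S) (n : ℕ) : (pre u n).length = n := by simp [pre]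

theorem pre_zero (u : PathSpace S) : pre u 0 = [] := by simp [pre]

theorem pre_congr {u v : PathSpace S} {n : ℕ} (h : ∀ i < n, u i = v i) : pre u n = pre v n := by
  simp only [pre]
  apply List.map_congr_left
  intro i hi
  exact h i (List.mem_range.1 hi)

theorem pre_eq_iff {u v : PathSpace S} {n : ℕ} : pre u n = pre v n ↔ ∀ i < n, u i = v i := by
  constructor
  · intro h i hi
    simp only [pre] at h
    exact List.map_inj_left.1 h i (List.mem_range.2 hi)
  · exact pre_congr

theorem mem_cyl_iff (u : PathSpace S) (l : List S) : u ∈ cyl l ↔ pre u l.length = l := by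
  constructor
  · intro h
    apply List.ext_getElem
    · simp [pre]
    · intro i h1 h2
      simp only [pre, List.getElem_map, List.getElem_range]
      exact h ⟨i, h2⟩
  · intro h i
    have : ∀ (i : ℕ) (hi : i < l.length), u i = l[i] := by
      intro i hi
      have h1 : (pre u l.length)[i]'(by simpa [pre] using hi) = u i := by simp [pre]
      rw [← h1]
      simp only [h]
    exact this i i.2

theorem cyl_nil : cyl ([] : List S) = Set.univ := by
  ext u; simp [mem_cyl_iff, pre]

theorem mem_cyl_snoc (u : PathSpace S) (l : List S) (x : S) :
    u ∈ cyl (l ++ [x]) ↔ u ∈ cyl l ∧ u l.length = x := by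
  rw [mem_cyl_iff, mem_cyl_iff]
  simp only [List.length_append, List.length_singleton, pre_succ]
  constructor
  · intro h
    have := List.append_inj h (by simp [pre])
    simpa using this
  · rintro ⟨h, h'⟩
    rw [h, h']

theorem measurable_coord (n : ℕ) : @Measurable (PathSpace S) S _ ⊤ (fun u => u n) := by
  let _ : MeasurableSpace S := ⊤
  exact measurable_pi_apply (X := fun _ : ℕ => S) n

theorem measurableSet_coord (n : ℕ) (p : S → Prop) :
    MeasurableSet {u : PathSpace S | p (u n)} := by
  let _ : MeasurableSpace S := ⊤
  exact measurable_coord n (show MeasurableSet {s : S | p s} from trivial)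

theorem measurableSet_cyl (l : List S) : MeasurableSet (cyl l) := by
  induction l using List.reverseRecOn with
  | nil => rw [cyl_nil]; exact MeasurableSet.univ
  | append_singleton l x ih =>
    have : cyl (l ++ [x]) = cyl l ∩ {u | u l.length = x} := by
      ext u; rw [mem_cyl_snoc]; rfl
    rw [this]
    exact ih.inter (measurableSet_coord _ (fun s => s = x))

/-- consistent weights on the tree of finite lists -/
structure TreeW (W : List S → ENNReal) : Prop where
  nil : W [] = 1
  sum : ∀ l, ∑' t, W (l ++ [t]) = W l

theorem TreeW.ne_top {W : List S → ENNReal} (h : TreeW W) (l : List S) : W l ≠ ⊤ := by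
  induction l using List.reverseRecOn with
  | nil => rw [h.nil]; simp
  | append_singleton l x ih =>
    exact ne_top_of_le_ne_top ih ((ENNReal.le_tsum x).trans (h.sum l).le)

theorem TreeW.countable_len {W : List S → ENNReal} (h : TreeW W) (n : ℕ) :
    {l | l.length = n ∧ W l ≠ 0}.Countable := by
  induction n with
  | zero =>
    apply (Set.countable_singleton []).mono
    rintro l ⟨hl, -⟩
    simpa using hl
  | succ n ih =>
    have : {l | l.length = n+1 ∧ W l ≠ 0} ⊆
        ⋃ l ∈ {l | l.length = n ∧ W l ≠ 0}, (fun t => l ++ [t]) '' {t | W (l ++ [t]) ≠ 0} := by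
      rintro l ⟨hl, hW⟩
      obtain rfl | ⟨l', x, rfl⟩ := l.eq_nil_or_concat'
      · simp at hl
      · simp only [Set.mem_iUnion]
        refine ⟨l', ⟨by simpa using hl, ?_⟩, x, hW, rfl⟩
        intro h0
        apply hW
        have := (ENNReal.le_tsum (f := fun t => W (l' ++ [t])) x).trans (h.sum l').le
        rw [h0] at this
        simpa using this
    refine Set.Countable.mono this (ih.biUnion ?_)
    intro l _
    apply Set.Countable.image
    have h1 : ∑' t, W (l ++ [t]) ≠ ⊤ := by rw [h.sum]; exact h.ne_top l
    exact Summable.countable_support_ennreal h1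

/-- a.e. path only visits prefixes of nonzero weight -/
theorem TreeW.ae_ne_zero {W : List S → ENNReal} (h : TreeW W)
    (μ : MeasureTheory.Measure (PathSpace S)) [MeasureTheory.IsProbabilityMeasure μ]
    (hμ : ∀ l, μ (cyl l) = W l) : ∀ᵐ u ∂μ, ∀ n, W (pre u n) ≠ 0 := by
  rw [MeasureTheory.ae_all_iff]
  intro n
  set Λ := {l | l.length = n ∧ W l ≠ 0} with hΛ
  have hc := h.countable_len n
  have hU : μ (⋃ l ∈ Λ, cyl l) = ∑' l : Λ, W l := by
    rw [MeasureTheory.measure_biUnion hc]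
    · simp_rw [hμ]; rfl
    · intro a ha b hb hab
      rw [Function.onFun, Set.disjoint_left]
      intro u h1 h2
      rw [mem_cyl_iff] at h1 h2
      rw [ha.1] at h1; rw [hb.1] at h2
      exact hab (h1.symm.trans h2)
    · intro l _; exact measurableSet_cyl l
  have key : ∀ n, ∑' l : {l : List S | l.length = n}, W l = 1 := by
    intro n
    induction n with
    | zero =>
      have : ∑' l : {l : List S | l.length = 0}, W l = W [] := by
        rw [tsum_eq_single ⟨[], rfl⟩]
        rintro ⟨l, hl⟩ hne
        simp at hl; subst hl; exact absurd rfl hne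
      rw [this, h.nil]
    | succ n ih =>
      rw [← ih]
      let e : ({l : List S | l.length = n} × S) ≃ {l : List S | l.length = n+1} :=
        Equiv.ofBijective (fun p => ⟨p.1.1 ++ [p.2], by simp [p.1.2.out]⟩) (by
          constructor
          · rintro ⟨⟨a, ha⟩, x⟩ ⟨⟨b, hb⟩, y⟩ hab
            simp only [Subtype.mk.injEq] at hab
            have := List.append_inj' hab rfl
            simp at this
            simp [this]
          · rintro ⟨l, hl⟩
            obtain rfl | ⟨l', x, rfl⟩ := l.eq_nil_or_concat'
            · simp at hl
            · exact ⟨⟨⟨l', by simpa using hl⟩, x⟩, rfl⟩)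
      rw [← e.tsum_eq, ENNReal.tsum_prod']
      congr 1; ext l
      exact h.sum l
  have hU1 : μ (⋃ l ∈ Λ, cyl l) = 1 := by
    rw [hU, ← key n, tsum_subtype Λ W, tsum_subtype {l : List S | l.length = n} W]
    congr 1; ext l
    simp only [Set.indicator, hΛ, Set.mem_ofPred_eq]
    by_cases h1 : l.length = n <;> by_cases h2 : W l = 0 <;> simp [h1, h2]
  have hm : MeasurableSet (⋃ l ∈ Λ, cyl l) := MeasurableSet.biUnion hc fun l _ => measurableSet_cyl l
  have := (MeasureTheory.prob_compl_eq_zero_iff hm).2 hU1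
  rw [MeasureTheory.ae_iff]
  refine MeasureTheory.measure_mono_null ?_ this
  intro u hu hu2
  simp only [Set.mem_iUnion] at hu2
  obtain ⟨l, hl, hul⟩ := hu2
  rw [mem_cyl_iff, hl.1] at hul
  apply hu
  rw [hul]; exact hl.2

theorem nat_measure_ext [MeasurableSpace S] (n0 : ℕ) (μ ν : MeasureTheory.Measure (ℕ → S))
    [MeasureTheory.IsFiniteMeasure μ] [MeasureTheory.IsFiniteMeasure ν]
    (h : ∀ n, n0 ≤ n → ∀ B, MeasurableSet B →
      μ (Preorder.frestrictLe (π := fun _ : ℕ => S) n ⁻¹' B) =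
      ν (Preorder.frestrictLe (π := fun _ : ℕ => S) n ⁻¹' B)) : μ = ν := by
  let P : (K : Finset ℕ) → MeasureTheory.Measure (∀ i : K, S) := fun K =>
    MeasureTheory.Measure.map (Finset.restrict (π := fun _ => S) K) ν
  have hP : ∀ K, MeasureTheory.IsFiniteMeasure (P K) := fun K => inferInstance
  have hν : MeasureTheory.IsProjectiveLimit (α := fun _ : ℕ => S) ν P :=
    fun K => rfl
  have hPF : MeasureTheory.IsProjectiveMeasureFamily (α := fun _ : ℕ => S) P := by
    intro K J hJK
    simp only [P]
    rw [MeasureTheory.Measure.map_map (Finset.measurable_restrict₂ (X := fun _ : ℕ => S) hJK)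
      (by fun_prop)]
    rfl
  have hμ : MeasureTheory.IsProjectiveLimit (α := fun _ : ℕ => S) μ P := by
    rw [MeasureTheory.isProjectiveLimit_nat_iff' hPF _ n0]
    intro n hn
    ext B hB
    simp only [P]
    rw [MeasureTheory.Measure.map_apply (by fun_prop) hB,
      MeasureTheory.Measure.map_apply (by fun_prop) hB]
    exact h n hn B hB
  exact MeasureTheory.IsProjectiveLimit.unique hμ hν

/-- two finite measures that agree on long cylinders and are carried by countably many prefixes
coincide -/
theorem measure_path_ext (n0 : ℕ) (μ ν : MeasureTheory.Measure (PathSpace S))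
    [MeasureTheory.IsFiniteMeasure μ] [MeasureTheory.IsFiniteMeasure ν]
    (heq : ∀ l : List S, n0 ≤ l.length → μ (cyl l) = ν (cyl l))
    (Λ : Set (List S)) (hc : ∀ n, {l ∈ Λ | l.length = n}.Countable)
    (h1 : ∀ᵐ u ∂μ, ∀ n, n0 ≤ n → pre u n ∈ Λ) (h2 : ∀ᵐ u ∂ν, ∀ n, n0 ≤ n → pre u n ∈ Λ) :
    μ = ν := by
  let _ : MeasurableSpace S := ⊤
  refine @nat_measure_ext S _ n0 μ ν ‹MeasureTheory.IsFiniteMeasure μ›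
    ‹MeasureTheory.IsFiniteMeasure ν› ?_
  · intro n hn B hB
    change μ _ = ν _
    set Q : Set (PathSpace S) := Preorder.frestrictLe (π := fun _ : ℕ => S) n ⁻¹' B with hQ
    change μ Q = ν Q
    set Θ : Set (List S) := {l | (l ∈ Λ ∧ l.length = n+1) ∧ ∃ u ∈ Q, u ∈ cyl l}
    have hΘc : Θ.Countable := (hc (n+1)).mono fun l hl => hl.1
    have gen : ∀ m : MeasureTheory.Measure (PathSpace S), (∀ᵐ u ∂m, ∀ n, n0 ≤ n → pre u n ∈ Λ) →
        m Q = ∑' l : Θ, m (cyl l.1) := by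
      intro m hm
      rw [← MeasureTheory.measure_biUnion hΘc]
      · apply MeasureTheory.measure_congr
        filter_upwards [hm] with u hu
        apply propext
        change u ∈ Q ↔ u ∈ ⋃ l ∈ Θ, cyl l
        simp only [Set.mem_iUnion]
        constructor
        · intro hq
          have hmem : u ∈ cyl (pre u (n+1)) := by rw [mem_cyl_iff, pre_length]
          exact ⟨pre u (n+1), ⟨⟨hu (n+1) (by omega), pre_length _ _⟩, u, hq, hmem⟩, hmem⟩
        · rintro ⟨l, ⟨⟨_, hl⟩, v, hv, hvl⟩, hul⟩
          rw [mem_cyl_iff, hl] at hvl hul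
          have hh := pre_eq_iff.1 (hvl.trans hul.symm)
          have : Preorder.frestrictLe (π := fun _ : ℕ => S) n v =
              Preorder.frestrictLe (π := fun _ : ℕ => S) n u := by
            ext i
            exact hh i.1 (by have := Finset.mem_Iic.1 i.2; omega)
          change Preorder.frestrictLe (π := fun _ : ℕ => S) n u ∈ B
          rw [← this]
          exact hv
      · intro a ha b hb hab
        rw [Function.onFun, Set.disjoint_left]
        intro u h1 h2
        rw [mem_cyl_iff] at h1 h2
        rw [ha.1.2] at h1; rw [hb.1.2] at h2
        exact hab (h1.symm.trans h2)
      · intro l _; exact measurableSet_cyl l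
    rw [gen μ h1, gen ν h2]
    congr 1; ext l
    exact heq _ (by have := l.2.1.2; omega)

theorem TreeW.unique {W : List S → ENNReal} (h : TreeW W)
    (μ ν : MeasureTheory.Measure (PathSpace S))
    [MeasureTheory.IsProbabilityMeasure μ] [MeasureTheory.IsProbabilityMeasure ν]
    (hμ : ∀ l, μ (cyl l) = W l) (hν : ∀ l, ν (cyl l) = W l) : μ = ν := by
  refine measure_path_ext 0 μ ν (fun l _ => by rw [hμ, hν]) {l | W l ≠ 0} ?_ ?_ ?_
  · intro n
    apply (h.countable_len n).mono
    rintro l ⟨h1, h2⟩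
    exact ⟨h2, h1⟩
  · filter_upwards [h.ae_ne_zero μ hμ] with u hu n _ using hu n
  · filter_upwards [h.ae_ne_zero ν hν] with u hu n _ using hu n

/-- existence of the measure in the countable case -/
theorem TreeW.exists_of_countable {C : Type} [Countable C] {W : List C → ENNReal} (h : TreeW W) :
    ∃ μ : MeasureTheory.Measure (PathSpace C), MeasureTheory.IsProbabilityMeasure μ ∧
      ∀ l, μ (cyl l) = W l := by
  let mC : MeasurableSpace C := ⊤
  have hpmf : ∀ l, ∃ p : PMF C, W l ≠ 0 → ∀ t, p t = W (l ++ [t]) / W l := by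
    intro l
    by_cases h0 : W l = 0
    · have : ∑' t, W ([] ++ [t]) = 1 := by rw [h.sum, h.nil]
      exact ⟨⟨fun t => W ([] ++ [t]), by rw [← this]; exact ENNReal.summable.hasSum⟩,
        fun h1 => absurd h0 h1⟩
    · refine ⟨⟨fun t => W (l ++ [t]) / W l, ?_⟩, fun _ t => rfl⟩
      have : ∑' t, W (l ++ [t]) / W l = 1 := by
        simp_rw [div_eq_mul_inv]
        rw [ENNReal.tsum_mul_right, h.sum, ENNReal.mul_inv_cancel h0 (h.ne_top l)]
      rw [← this]; exact ENNReal.summable.hasSum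
  choose p hp using hpmf
  have c0 : C := (p []).support_nonempty.some
  let ext : (n : ℕ) → (∀ _ : Finset.Iic n, C) → PathSpace C := fun n y i =>
    if hi : i ∈ Finset.Iic n then y ⟨i, hi⟩ else c0
  have hext : ∀ n (u : ℕ → C), pre (ext n (Preorder.frestrictLe (π := fun _ : ℕ => C) n u)) (n+1)
      = pre (S := C) u (n+1) := by
    intro n u
    apply pre_congr
    intro i hi
    have : i ∈ Finset.Iic n := by simp; omega
    simp [ext]
    intro h; omega
  let κ : (n : ℕ) → ProbabilityTheory.Kernel (∀ _ : Finset.Iic n, C) C := fun n =>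
    ⟨fun y => (p (pre (ext n y) (n+1))).toMeasure, measurable_of_countable _⟩
  have hκ : ∀ n, ProbabilityTheory.IsMarkovKernel (κ n) := fun n =>
    ⟨fun y => PMF.toMeasure.isProbabilityMeasure _⟩
  let μ : MeasureTheory.Measure (ℕ → C) :=
    ProbabilityTheory.Kernel.trajMeasure (X := fun _ => C) (p []).toMeasure κ
  have hμp : MeasureTheory.IsProbabilityMeasure μ := by
    have : MeasureTheory.IsProbabilityMeasure (p []).toMeasure := PMF.toMeasure.isProbabilityMeasure _
    simp only [μ]
    infer_instance
  refine ⟨μ, hμp, ?_⟩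
  have hpt : ∀ q : PMF C, ∀ x, q.toMeasure {x} = q x := fun q x =>
    PMF.toMeasure_apply_singleton _ _ (MeasurableSet.singleton x)
  have h0 : μ.map (Preorder.frestrictLe (π := fun _ : ℕ => C) 0) =
      (p []).toMeasure.map
        (MeasurableEquiv.piUnique (fun _ : Finset.Iic 0 => C)).symm := by
    simp only [μ]
    rw [ProbabilityTheory.Kernel.trajMeasure, MeasureTheory.Measure.map_comp _ _ (by fun_prop),
      ProbabilityTheory.Kernel.traj_map_frestrictLe, ProbabilityTheory.Kernel.partialTraj_self,
      MeasureTheory.Measure.id_comp]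
  intro l
  induction l using List.reverseRecOn with
  | nil => rw [cyl_nil, h.nil]; exact hμp.measure_univ
  | append_singleton l x ih =>
    rcases Nat.eq_zero_or_pos l.length with hl | hl
    · have hl : l = [] := by simpa using hl
      subst hl
      have hW0 : W [] ≠ 0 := by rw [h.nil]; simp
      have e1 : p [] x = W ([] ++ [x]) := by rw [hp [] hW0, h.nil, div_one]
      rw [← e1, ← hpt]
      have : (p []).toMeasure {x} = μ.map (Preorder.frestrictLe (π := fun _ : ℕ => C) 0)
          {fun _ => x} := by
        rw [h0, MeasureTheory.Measure.map_apply (MeasurableEquiv.measurable _)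
          (MeasurableSet.singleton _)]
        congr 1
        ext t
        simp only [Set.mem_singleton_iff, Set.mem_preimage]
        constructor
        · rintro rfl; ext i; rfl
        · intro h
          exact congrFun h ⟨0, by simp⟩
      rw [this, MeasureTheory.Measure.map_apply (by fun_prop) (MeasurableSet.singleton _)]
      change μ _ = μ _
      congr 1
      ext u
      refine (mem_cyl_snoc u [] x).trans ?_
      rw [cyl_nil]
      simp only [Set.mem_univ, true_and, Set.mem_preimage, Set.mem_singleton_iff, List.length_nil]
      constructor
      · rintro rfl
        ext ⟨i, hi⟩
        have : i = 0 := by simpa using hi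
        subst this; rfl
      · intro h
        exact congrFun h ⟨0, by simp⟩
    · obtain ⟨m, hm⟩ : ∃ m, l.length = m + 1 := ⟨l.length - 1, by omega⟩
      let u0 : PathSpace C := fun i => l.getD i c0
      have hu0 : pre u0 (m+1) = l := by
        rw [← hm, ← mem_cyl_iff]
        intro i
        simp [u0]
      let y : ∀ _ : Finset.Iic m, C := Preorder.frestrictLe (π := fun _ : ℕ => C) m u0
      have key := ProbabilityTheory.Kernel.map_frestrictLe_trajMeasure_compProd_eq_map_trajMeasure
        (X := fun _ => C) (μ₀ := (p []).toMeasure) (κ := κ) (a := m)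
      have key2 := congrArg (fun ν => ν ({y} ×ˢ {x})) key
      have hcy : ∀ u : PathSpace C, u ∈ cyl l ↔
          Preorder.frestrictLe (π := fun _ : ℕ => C) m u = y := by
        intro u
        rw [mem_cyl_iff, hm]
        conv_lhs => rw [← hu0]
        rw [pre_eq_iff]
        constructor
        · intro h
          ext ⟨i, hi⟩
          exact h i (by have := Finset.mem_Iic.1 hi; omega)
        · intro h i hi
          exact congrFun h ⟨i, by simp; omega⟩
      have hyy : p (pre (ext m y) (m+1)) = p l := by rw [hext, hu0]
      rw [MeasureTheory.Measure.compProd_apply_prod (MeasurableSet.singleton _)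
        (MeasurableSet.singleton _), MeasureTheory.Measure.restrict_singleton,
        MeasureTheory.lintegral_smul_measure, MeasureTheory.lintegral_dirac,
        MeasureTheory.Measure.map_apply (by fun_prop) (MeasurableSet.singleton _),
        MeasureTheory.Measure.map_apply (by fun_prop)
          ((MeasurableSet.singleton _).prod (MeasurableSet.singleton _))] at key2
      have s1 : (cyl (l ++ [x]) : Set (ℕ → C)) =
          (fun u => (Preorder.frestrictLe (π := fun _ : ℕ => C) m u, u (m + 1))) ⁻¹' {y} ×ˢ {x} := by
        ext u
        refine (mem_cyl_snoc u l x).trans ?_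
        rw [hcy, hm]
        exact Iff.rfl
      have s2 : (cyl l : Set (ℕ → C)) = Preorder.frestrictLe (π := fun _ : ℕ => C) m ⁻¹' {y} := by
        ext u
        exact hcy u
      have e2 : κ m y {x} = p l x := by
        rw [← hpt, ← hyy]; rfl
      have e3 : μ (Preorder.frestrictLe (π := fun _ : ℕ => C) m ⁻¹' {y}) = W l :=
        (congrArg μ s2).symm.trans ih
      refine (congrArg μ s1).trans (key2.symm.trans ?_)
      change μ (Preorder.frestrictLe (π := fun _ : ℕ => C) m ⁻¹' {y}) * _ = _
      rw [e3, e2]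
      by_cases hW : W l = 0
      · rw [hW, zero_mul]
        have := (ENNReal.le_tsum (f := fun t => W (l ++ [t])) x).trans (h.sum l).le
        rw [hW] at this
        exact (this.antisymm zero_le).symm
      · rw [hp l hW, ENNReal.mul_div_cancel hW (h.ne_top l)]

theorem TreeW.exists {W : List S → ENNReal} (h : TreeW W) :
    ∃ μ : MeasureTheory.Measure (PathSpace S), MeasureTheory.IsProbabilityMeasure μ ∧
      ∀ l, μ (cyl l) = W l := by
  let C : Set S := {t | ∃ l, W (l ++ [t]) ≠ 0}
  have hC : C.Countable := by
    have : C ⊆ ⋃ n, ⋃ l ∈ {l : List S | l.length = n ∧ W l ≠ 0}, {x | x ∈ l} := by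
      rintro t ⟨l, hl⟩
      simp only [Set.mem_iUnion]
      refine ⟨l.length + 1, l ++ [t], ⟨by simp, hl⟩, by simp⟩
    refine Set.Countable.mono this (Set.countable_iUnion fun n => ?_)
    exact (h.countable_len n).biUnion fun l _ => (List.finite_toSet l).countable
  have : Countable C := hC.to_subtype
  have hmem : ∀ l, W l ≠ 0 → ∀ x ∈ l, x ∈ C := by
    intro l
    induction l using List.reverseRecOn with
    | nil => simp
    | append_singleton l y ih =>
      intro hW x hx
      rcases List.mem_append.1 hx with hx | hx
      · refine ih ?_ x hx
        intro h0
        apply hW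
        have := (ENNReal.le_tsum (f := fun t => W (l ++ [t])) y).trans (h.sum l).le
        rw [h0] at this
        simpa using this
      · rw [List.mem_singleton.1 hx]; exact ⟨l, hW⟩
  have hV : TreeW (fun l : List C => W (l.map Subtype.val)) := by
    refine ⟨by simpa using h.nil, fun l => ?_⟩
    rw [← h.sum]
    simp only [List.map_append, List.map_cons, List.map_nil]
    have := tsum_subtype_eq_of_support_subset (s := C)
      (f := fun t => W (l.map Subtype.val ++ [t])) (fun t ht => ⟨_, ht⟩)
    exact this
  obtain ⟨μ, hμ, hμW⟩ := hV.exists_of_countable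
  let φ : PathSpace C → PathSpace S := fun u n => (u n).1
  have hφ : Measurable φ := by
    let _ : MeasurableSpace S := ⊤
    refine measurable_pi_iff.2 fun n => ?_
    let mC : MeasurableSpace C := ⊤
    have h1 : Measurable (fun c : C => c.1) := fun _ _ => trivial
    exact h1.comp (measurable_coord n)
  refine ⟨μ.map φ, MeasureTheory.Measure.isProbabilityMeasure_map hφ.aemeasurable, fun l => ?_⟩
  rw [MeasureTheory.Measure.map_apply hφ (measurableSet_cyl l)]
  have hpre : ∀ (u : PathSpace C) n, pre (φ u) n = (pre u n).map Subtype.val := by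
    intro u n
    simp only [pre, List.map_map]
    rfl
  by_cases hl : ∀ x ∈ l, x ∈ C
  · lift l to List C using hl
    rw [← hμW]
    congr 1
    ext u
    rw [Set.mem_preimage, mem_cyl_iff, mem_cyl_iff, hpre, List.length_map]
    exact List.map_injective_iff.2 Subtype.val_injective |>.eq_iff
  · have : W l = 0 := by
      by_contra h0
      exact hl (hmem l h0)
    rw [this]
    have : φ ⁻¹' cyl l = ∅ := by
      ext u
      simp only [Set.mem_preimage, Set.mem_empty_iff_false, iff_false]
      intro hu
      rw [mem_cyl_iff, hpre] at hu
      apply hl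
      intro x hx
      rw [← hu] at hx
      obtain ⟨y, -, rfl⟩ := List.mem_map.1 hx
      exact y.2
    rw [this]; simp

/-! ### The weights of the Markov chain -/

/-- one-step transition probability given the history -/
def stepW (A : Arena S) (σ1 : Strategy A Player.one) (σ2 : Strategy A Player.two)
    (l : List S) (s t : S) : ℝ :=
  if A.E s = ∅ then (if t = s then 1 else 0) else
  match A.owner s with
  | Player.one => if t = σ1.next l s then 1 else 0
  | Player.two => if t = σ2.next l s then 1 else 0
  | Player.nature => A.prob s t

theorem app2_inj {l l' : List S} {s t s' t' : S} (h : l ++ [s, t] = l' ++ [s', t']) :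
    l = l' ∧ s = s' ∧ t = t' := by
  have := List.append_inj' h rfl
  simpa using this

theorem pathProb_snoc (A : Arena S) (l : List S) (s t : S) :
    pathProb A (l ++ [s, t]) = pathProb A (l ++ [s]) * stepProb A s t := by
  induction l with
  | nil => simp [pathProb]
  | cons a l ih =>
    cases l with
    | nil => simp [pathProb]
    | cons b l =>
      simp only [List.cons_append, pathProb] at ih ⊢
      rw [ih, mul_assoc]

theorem MC_ne_nil {A : Arena S} {σ1 : Strategy A Player.one} {σ2 : Strategy A Player.two} {s0 : S}
    : ¬ MC A σ1 σ2 s0 [] := by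
  intro h
  generalize hl : ([] : List S) = l at h
  cases h <;> simp at hl

theorem MC_single {A : Arena S} {σ1 : Strategy A Player.one} {σ2 : Strategy A Player.two} {s0 s : S}
    : MC A σ1 σ2 s0 [s] ↔ s = s0 := by
  constructor
  · intro h
    generalize hl : ([s] : List S) = l at h
    cases h with
    | root => simpa using hl
    | one l s h => rcases l with _ | ⟨a, _ | ⟨b, l⟩⟩ <;> simp at hl
    | two l s h => rcases l with _ | ⟨a, _ | ⟨b, l⟩⟩ <;> simp at hl
    | nature l s h => rcases l with _ | ⟨a, _ | ⟨b, l⟩⟩ <;> simp at hl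
    | term l s h => rcases l with _ | ⟨a, _ | ⟨b, l⟩⟩ <;> simp at hl
  · rintro rfl; exact MC.root

theorem nature_nonterm {A : Arena S} (hA : A.Wellformed) {s : S} (h : A.owner s = Player.nature) :
    A.E s ≠ ∅ := by
  obtain ⟨_, h2, h3⟩ := hA s h
  intro h4
  rw [h3, Function.support_eq_empty_iff] at h4
  rw [h4] at h2
  have := h2.unique hasSum_zero
  exact one_ne_zero this

theorem MC_snoc {A : Arena S} (hA : A.Wellformed) {σ1 : Strategy A Player.one}
    {σ2 : Strategy A Player.two} {s0 : S} (l : List S) (s t : S) :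
    MC A σ1 σ2 s0 (l ++ [s, t]) ↔ MC A σ1 σ2 s0 (l ++ [s]) ∧ stepW A σ1 σ2 l s t ≠ 0 := by
  constructor
  · intro h
    generalize hl : l ++ [s, t] = L at h
    cases h with
    | root => rcases l with _ | ⟨a, _ | ⟨b, l⟩⟩ <;> simp at hl
    | one l s h h1 h2 =>
      obtain ⟨rfl, rfl, rfl⟩ := app2_inj hl
      exact ⟨h, by simp [stepW, h1, h2]⟩
    | two l s h h1 h2 =>
      obtain ⟨rfl, rfl, rfl⟩ := app2_inj hl
      exact ⟨h, by simp [stepW, h1, h2]⟩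
    | nature l s t h h1 h2 =>
      obtain ⟨rfl, rfl, rfl⟩ := app2_inj hl
      refine ⟨h, ?_⟩
      have h3 := nature_nonterm hA h1
      rw [(hA _ h1).2.2] at h2
      simpa [stepW, h1, h3] using h2
    | term l s h h1 =>
      obtain ⟨rfl, rfl, rfl⟩ := app2_inj hl
      exact ⟨h, by simp [stepW, h1]⟩
  · rintro ⟨h, hs⟩
    by_cases h0 : A.E s = ∅
    · simp [stepW, h0] at hs
      subst hs
      exact MC.term _ _ h h0
    · cases ho : A.owner s with
      | one => simp [stepW, h0, ho] at hs; subst hs; exact MC.one _ _ h ho h0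
      | two => simp [stepW, h0, ho] at hs; subst hs; exact MC.two _ _ h ho h0
      | nature =>
        simp [stepW, h0, ho] at hs
        refine MC.nature _ _ _ h ho ?_
        rw [(hA _ ho).2.2]; exact hs

theorem cylWeight_snoc {A : Arena S} (hA : A.Wellformed) (σ1 : Strategy A Player.one)
    (σ2 : Strategy A Player.two) (s0 : S) (l : List S) (s t : S) :
    cylWeight A σ1 σ2 s0 (l ++ [s, t]) = cylWeight A σ1 σ2 s0 (l ++ [s]) * stepW A σ1 σ2 l s t := by
  unfold cylWeight
  rw [MC_snoc hA]
  by_cases h : MC A σ1 σ2 s0 (l ++ [s])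
  · by_cases h2 : stepW A σ1 σ2 l s t = 0
    · simp [h2]
    · rw [if_pos ⟨h, h2⟩, if_pos h, pathProb_snoc]
      congr 1
      by_cases h4 : A.E s = ∅
      · have ho : A.owner s ≠ Player.nature := fun ho => nature_nonterm hA ho h4
        simp [stepW, h4] at h2
        simp [stepW, stepProb, h4, ho, h2]
      · cases ho : A.owner s with
        | one => simp [stepW, h4, ho] at h2; simp [stepW, stepProb, h4, ho, h2]
        | two => simp [stepW, h4, ho] at h2; simp [stepW, stepProb, h4, ho, h2]
        | nature => simp [stepW, stepProb, h4, ho]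
  · simp [h]

theorem cylWeight_single (A : Arena S) (σ1 : Strategy A Player.one)
    (σ2 : Strategy A Player.two) (s0 s : S) :
    cylWeight A σ1 σ2 s0 [s] = if s = s0 then 1 else 0 := by
  unfold cylWeight
  simp [MC_single, pathProb]

theorem stepW_nonneg {A : Arena S} (hA : A.Wellformed) (σ1 : Strategy A Player.one)
    (σ2 : Strategy A Player.two) (l : List S) (s t : S) : 0 ≤ stepW A σ1 σ2 l s t := by
  by_cases h4 : A.E s = ∅
  · simp only [stepW, h4, if_true]; split_ifs <;> simp
  · simp only [stepW, h4, if_false]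
    cases ho : A.owner s with
    | one => dsimp only; split_ifs <;> simp
    | two => dsimp only; split_ifs <;> simp
    | nature => exact (hA s ho).1 t

theorem stepW_sum {A : Arena S} (hA : A.Wellformed) (σ1 : Strategy A Player.one)
    (σ2 : Strategy A Player.two) (l : List S) (s : S) : HasSum (stepW A σ1 σ2 l s) 1 := by
  unfold stepW
  split_ifs
  · exact hasSum_ite_eq s 1
  · cases ho : A.owner s with
    | one => exact hasSum_ite_eq _ 1
    | two => exact hasSum_ite_eq _ 1
    | nature => exact (hA s ho).2.1

theorem cylWeight_nonneg {A : Arena S} (hA : A.Wellformed) (σ1 : Strategy A Player.one)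
    (σ2 : Strategy A Player.two) (s0 : S) (l : List S) : 0 ≤ cylWeight A σ1 σ2 s0 l := by
  induction l using List.reverseRecOn with
  | nil => simp [cylWeight, MC_ne_nil]
  | append_singleton l t ih =>
    obtain rfl | ⟨l', x, rfl⟩ := l.eq_nil_or_concat'
    · rw [List.nil_append, cylWeight_single]; split_ifs <;> simp
    · rw [List.append_assoc]
      simp only [List.singleton_append]
      rw [cylWeight_snoc hA]
      exact mul_nonneg ih (stepW_nonneg hA ..)

/-- the weight of the Markov chain as a tree weight -/
def cw (A : Arena S) (σ1 : Strategy A Player.one)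
    (σ2 : Strategy A Player.two) (s0 : S) (l : List S) : ENNReal :=
  if l = [] then 1 else ENNReal.ofReal (cylWeight A σ1 σ2 s0 l)

theorem cw_snoc {A : Arena S} (hA : A.Wellformed) (σ1 : Strategy A Player.one)
    (σ2 : Strategy A Player.two) (s0 : S) (l : List S) (s t : S) :
    cw A σ1 σ2 s0 (l ++ [s, t]) =
      cw A σ1 σ2 s0 (l ++ [s]) * ENNReal.ofReal (stepW A σ1 σ2 l s t) := by
  simp only [cw, List.append_eq_nil_iff, List.cons_ne_nil, and_false, if_false]
  rw [cylWeight_snoc hA, ENNReal.ofReal_mul (cylWeight_nonneg hA ..)]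

theorem cw_single (A : Arena S) (σ1 : Strategy A Player.one)
    (σ2 : Strategy A Player.two) (s0 s : S) :
    cw A σ1 σ2 s0 [s] = if s = s0 then 1 else 0 := by
  simp only [cw, List.cons_ne_nil, if_false, cylWeight_single]
  split_ifs <;> simp

theorem cw_tree {A : Arena S} (hA : A.Wellformed) (σ1 : Strategy A Player.one)
    (σ2 : Strategy A Player.two) (s0 : S) : TreeW (cw A σ1 σ2 s0) := by
  refine ⟨by simp [cw], fun l => ?_⟩
  obtain rfl | ⟨l', x, rfl⟩ := l.eq_nil_or_concat'
  · simp only [List.nil_append, cw_single, tsum_ite_eq]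
    simp [cw]
  · simp only [List.append_assoc, List.singleton_append, cw_snoc hA]
    rw [ENNReal.tsum_mul_left, ← ENNReal.ofReal_tsum_of_nonneg (stepW_nonneg hA σ1 σ2 l' x)
      (stepW_sum hA ..).summable, (stepW_sum hA ..).tsum_eq]
    simp

theorem pathMeasure_spec {A : Arena S} (hA : A.Wellformed) (σ1 : Strategy A Player.one)
    (σ2 : Strategy A Player.two) (s0 : S) :
    MeasureTheory.IsProbabilityMeasure (pathMeasure A σ1 σ2 s0) ∧
      ∀ l, pathMeasure A σ1 σ2 s0 (cyl l) = cw A σ1 σ2 s0 l := by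
  have hex : ∃ μ : MeasureTheory.Measure (PathSpace S), MeasureTheory.IsProbabilityMeasure μ ∧
      ∀ l : List S, l ≠ [] → μ (cyl l) = ENNReal.ofReal (cylWeight A σ1 σ2 s0 l) := by
    obtain ⟨μ, h1, h2⟩ := (cw_tree hA σ1 σ2 s0).exists
    refine ⟨μ, h1, fun l hl => ?_⟩
    rw [h2, cw, if_neg hl]
  rw [pathMeasure, dif_pos hex]
  obtain ⟨h1, h2⟩ := hex.choose_spec
  refine ⟨h1, fun l => ?_⟩
  by_cases hl : l = []
  · subst hl
    rw [cyl_nil, h1.measure_univ]; simp [cw]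
  · rw [h2 l hl, cw, if_neg hl]

/-- a terminal state in the history is the current state -/
theorem cw_terminal {A : Arena S} (hA : A.Wellformed) (σ1 : Strategy A Player.one)
    (σ2 : Strategy A Player.two) (s0 : S) (l : List S) (s y : S)
    (h : cw A σ1 σ2 s0 (l ++ [s]) ≠ 0) (hy : y ∈ l) (hE : A.E y = ∅) : s = y := by
  induction l using List.reverseRecOn generalizing s with
  | nil => simp at hy
  | append_singleton l x ih =>
    rw [List.append_assoc, List.singleton_append, cw_snoc hA] at h
    obtain ⟨h1, h2⟩ := mul_ne_zero_iff.1 h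
    have hxy : x = y := by
      rcases List.mem_append.1 hy with hy | hy
      · exact ih x h1 hy
      · exact (List.mem_singleton.1 hy).symm
    subst hxy
    by_contra hne
    apply h2
    simp [stepW, hE, hne]

/-- the strategy after history `h` -/
def Strategy.shift {A : Arena S} {pl : Player} (τ : Strategy A pl) (h : List S) :
    Strategy A pl where
  next := fun l s => τ.next (h ++ l) s
  valid := fun l s => τ.valid (h ++ l) s

theorem stepW_shift {A : Arena S} (σ1 : Strategy A Player.one)
    (σ2 : Strategy A Player.two) (h l : List S) (s t : S) :
    stepW A σ1 σ2 (h ++ l) s t = stepW A (σ1.shift h) (σ2.shift h) l s t := rfl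

theorem cw_shift {A : Arena S} (hA : A.Wellformed) (σ1 : Strategy A Player.one)
    (σ2 : Strategy A Player.two) (s0 : S) (h : List S) (s : S) (l : List S) :
    cw A σ1 σ2 s0 (h ++ s :: l) =
      cw A σ1 σ2 s0 (h ++ [s]) * cw A (σ1.shift h) (σ2.shift h) s (s :: l) := by
  induction l using List.reverseRecOn with
  | nil => simp [cw_single]
  | append_singleton l x ih =>
    obtain ⟨l', y, hl⟩ : ∃ l' y, s :: l = l' ++ [y] := by
      obtain h | h := (s :: l).eq_nil_or_concat'
      · simp at h
      · exact h
    have e : s :: (l ++ [x]) = l' ++ [y, x] := by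
      rw [← List.cons_append, hl]; simp
    rw [e, ← List.append_assoc, cw_snoc hA, cw_snoc hA, List.append_assoc, ← hl, ih, mul_assoc,
      stepW_shift]

/-! ### Prepending a finite history -/

/-- prepend one state -/
def consP (a : S) (u : PathSpace S) : PathSpace S := fun n => Nat.casesOn n a (fun k => u k)

/-- prepend a finite list of states -/
def prep : List S → PathSpace S → PathSpace S
  | [], u => u
  | a :: l, u => consP a (prep l u)

theorem pre_consP (a : S) (u : PathSpace S) (n : ℕ) : pre (consP a u) (n+1) = a :: pre u n := by
  simp only [pre, List.range_succ_eq_map, List.map_cons, List.map_map]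
  rfl

theorem pre_prep (h : List S) (u : PathSpace S) (n : ℕ) :
    pre (prep h u) (h.length + n) = h ++ pre u n := by
  induction h with
  | nil => simp [prep]
  | cons a h ih =>
    rw [List.length_cons, show h.length + 1 + n = (h.length + n) + 1 by omega, prep, pre_consP, ih]
    rfl

theorem pre_add (u : PathSpace S) (n k : ℕ) :
    pre u (n + k) = pre u n ++ pre (fun i => u (n + i)) k := by
  simp only [pre, List.range_add, List.map_append, List.map_map]
  rfl

theorem cyl_append_subset (h l : List S) : cyl (h ++ l) ⊆ cyl h := by
  intro u hu
  rw [mem_cyl_iff, List.length_append, pre_add] at hu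
  rw [mem_cyl_iff]
  exact (List.append_inj hu (by simp [pre])).1

theorem mem_cyl_prefix {u : PathSpace S} {h l : List S} (hh : u ∈ cyl h) (hl : u ∈ cyl l)
    (hle : h.length ≤ l.length) : ∃ b, l = h ++ b := by
  rw [mem_cyl_iff] at hh hl
  obtain ⟨k, hk⟩ := Nat.exists_eq_add_of_le hle
  rw [hk, pre_add, hh] at hl
  exact ⟨_, hl.symm⟩

theorem prep_mem_cyl (h l : List S) (u : PathSpace S) : prep h u ∈ cyl (h ++ l) ↔ u ∈ cyl l := by
  rw [mem_cyl_iff, mem_cyl_iff, List.length_append, pre_prep]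
  simp

theorem prep_mem_cyl' (h : List S) (u : PathSpace S) : prep h u ∈ cyl h := by
  have := (prep_mem_cyl h [] u).2 (by rw [cyl_nil]; trivial)
  simpa using this

theorem measurable_path {X : Type} [MeasurableSpace X] {f : X → PathSpace S}
    (h : ∀ n, @Measurable _ _ _ ⊤ (fun x => f x n)) : Measurable f := by
  let _ : MeasurableSpace S := ⊤
  exact measurable_pi_iff.2 h

theorem measurable_consP (a : S) : Measurable (consP a) := by
  apply measurable_path
  intro n
  let _ : MeasurableSpace S := ⊤
  cases n with
  | zero => exact measurable_const
  | succ n => exact measurable_coord n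

theorem measurable_prep (h : List S) : Measurable (prep h) := by
  induction h with
  | nil => exact measurable_id
  | cons a h ih => exact (measurable_consP a).comp ih

open MeasureTheory in
theorem restrict_cyl {A : Arena S} (hA : A.Wellformed) (σ1 : Strategy A Player.one)
    (σ2 : Strategy A Player.two) (s0 : S) (h : List S) (s : S) :
    (pathMeasure A σ1 σ2 s0).restrict (cyl (h ++ [s])) =
      cw A σ1 σ2 s0 (h ++ [s]) •
        (pathMeasure A (σ1.shift h) (σ2.shift h) s).map (prep h) := by
  obtain ⟨p1, w1⟩ := pathMeasure_spec hA σ1 σ2 s0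
  obtain ⟨p2, w2⟩ := pathMeasure_spec hA (σ1.shift h) (σ2.shift h) s
  have t1 := cw_tree hA σ1 σ2 s0
  have t2 := cw_tree hA (σ1.shift h) (σ2.shift h) s
  have pm := Measure.isProbabilityMeasure_map (μ := pathMeasure A (σ1.shift h) (σ2.shift h) s)
    (measurable_prep h).aemeasurable
  have fin := Measure.smul_finite ((pathMeasure A (σ1.shift h) (σ2.shift h) s).map (prep h))
    (t1.ne_top (h ++ [s]))
  have cnt : ∀ n, {l ∈ ({l | cw A σ1 σ2 s0 l ≠ 0} ∪
      (fun l => h ++ l) '' {l | cw A (σ1.shift h) (σ2.shift h) s l ≠ 0}) | l.length = n}.Countable := by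
    intro n
    refine Set.Countable.mono ?_ ((t1.countable_len n).union
      ((t2.countable_len (n - h.length)).image (fun l => h ++ l)))
    rintro l ⟨hl | ⟨l, hl, rfl⟩, hn⟩
    · exact Or.inl ⟨hn, hl⟩
    · refine Or.inr ⟨l, ⟨?_, hl⟩, rfl⟩
      simp at hn; omega
  refine measure_path_ext (h.length + 1) _ _ ?_
    ({l | cw A σ1 σ2 s0 l ≠ 0} ∪ (fun l => h ++ l) '' {l | cw A (σ1.shift h) (σ2.shift h) s l ≠ 0})
    ?_ ?_ ?_
  · intro l hl
    rw [Measure.restrict_apply (measurableSet_cyl l), Measure.smul_apply,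
      Measure.map_apply (measurable_prep h) (measurableSet_cyl l), smul_eq_mul]
    by_cases hpl : ∃ x b, l = h ++ x :: b
    · obtain ⟨x, b, rfl⟩ := hpl
      have e : prep h ⁻¹' cyl (h ++ x :: b) = cyl (x :: b) := by
        ext u; exact prep_mem_cyl h _ u
      rw [e, w2]
      by_cases hx : x = s
      · subst hx
        have : cyl (h ++ x :: b) ∩ cyl (h ++ [x]) = cyl (h ++ x :: b) := by
          apply Set.inter_eq_left.2
          have := cyl_append_subset (h ++ [x]) b
          simpa using this
        rw [this, w1, cw_shift hA]
      · have e1 : cyl (h ++ x :: b) ∩ cyl (h ++ [s]) = ∅ := by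
          ext u
          simp only [Set.mem_inter_iff, Set.mem_empty_iff_false, iff_false]
          rintro ⟨h1, h2⟩
          obtain ⟨c, hc⟩ := mem_cyl_prefix h2 h1 (by simp)
          simp at hc
          exact hx hc.1
        have e2 : cw A (σ1.shift h) (σ2.shift h) s (x :: b) = 0 := by
          rw [← w2]
          refine measure_mono_null (cyl_append_subset [x] b) ?_
          rw [w2, cw_single, if_neg hx]
        rw [e1, e2]; simp
    · have hne : ∀ u, u ∈ cyl l → u ∉ cyl h := by
        intro u h1 h2
        apply hpl
        obtain ⟨b, rfl⟩ := mem_cyl_prefix h2 h1 (by omega)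
        cases b with
        | nil => simp at hl
        | cons x b => exact ⟨x, b, rfl⟩
      have e1 : cyl l ∩ cyl (h ++ [s]) = ∅ := by
        ext u
        simp only [Set.mem_inter_iff, Set.mem_empty_iff_false, iff_false]
        rintro ⟨h1, h2⟩
        exact hne u h1 (cyl_append_subset _ _ h2)
      have e2 : prep h ⁻¹' cyl l = ∅ := by
        ext u
        simp only [Set.mem_preimage, Set.mem_empty_iff_false, iff_false]
        intro h1
        exact hne _ h1 (prep_mem_cyl' h u)
      rw [e1, e2]; simp
  · exact cnt
  · apply ae_restrict_of_ae
    filter_upwards [t1.ae_ne_zero _ w1] with u hu n _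
    exact Or.inl (hu n)
  · apply Measure.ae_smul_measure
    have key : ∀ᵐ u ∂(pathMeasure A (σ1.shift h) (σ2.shift h) s), ∀ n, h.length + 1 ≤ n →
        pre (prep h u) n ∈ ({l | cw A σ1 σ2 s0 l ≠ 0} ∪
          (fun l => h ++ l) '' {l | cw A (σ1.shift h) (σ2.shift h) s l ≠ 0}) := by
      filter_upwards [t2.ae_ne_zero _ w2] with u hu n hn
      obtain ⟨k, rfl⟩ := Nat.exists_eq_add_of_le (show h.length ≤ n by omega)
      rw [pre_prep]
      exact Or.inr ⟨_, hu k, rfl⟩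
    refine (ae_map_iff (measurable_prep h).aemeasurable ?_).2 key
    have e : {u : PathSpace S | ∀ n, h.length + 1 ≤ n → pre u n ∈ ({l | cw A σ1 σ2 s0 l ≠ 0} ∪
          (fun l => h ++ l) '' {l | cw A (σ1.shift h) (σ2.shift h) s l ≠ 0})} =
        ⋂ n, ⋂ (_ : h.length + 1 ≤ n), ⋃ l ∈ {l ∈ ({l | cw A σ1 σ2 s0 l ≠ 0} ∪
      (fun l => h ++ l) '' {l | cw A (σ1.shift h) (σ2.shift h) s l ≠ 0}) | l.length = n}, cyl l := by
      ext u
      simp only [Set.mem_setOf_eq, Set.mem_iInter, Set.mem_iUnion]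
      refine forall_congr' fun n => forall_congr' fun _ => ?_
      constructor
      · intro hu
        exact ⟨pre u n, ⟨hu, pre_length u n⟩, (mem_cyl_iff _ _).2 (by rw [pre_length])⟩
      · rintro ⟨l, ⟨hl, hn⟩, hul⟩
        rw [mem_cyl_iff, hn] at hul
        rw [hul]; exact hl
    rw [e]
    exact MeasurableSet.iInter fun n => MeasurableSet.iInter fun _ =>
      MeasurableSet.biUnion (cnt n) fun l _ => measurableSet_cyl l

/-! ### Payoffs -/

theorem even_sSup_iff (Q : Set ℕ) : Even (sSup Q) ↔
    (∀ m, ∃ n, m < n ∧ n ∈ Q) ∨ (∀ n, n ∉ Q) ∨ ∃ k, Even k ∧ k ∈ Q ∧ ∀ n, n ∈ Q → n ≤ k := by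
  by_cases hb : BddAbove Q
  · rcases Q.eq_empty_or_nonempty with rfl | hne
    · simp
    · have h1 := Nat.sSup_mem hne hb
      constructor
      · intro h
        exact Or.inr (Or.inr ⟨_, h, h1, fun n hn => le_csSup hb hn⟩)
      · rintro (h | h | ⟨k, h2, h3, h4⟩)
        · obtain ⟨m, hm⟩ := hb
          obtain ⟨n, h2, h3⟩ := h m
          exact absurd (hm h3) (by omega)
        · exact absurd h1 (h _)
        · have : sSup Q = k := le_antisymm (csSup_le hne h4) (le_csSup hb h3)
          rwa [this]
  · rw [Nat.sSup_of_not_bddAbove hb]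
    simp only [Even.zero, true_iff]
    left
    intro m
    by_contra h
    push Not at h
    exact hb ⟨m, fun n hn => by by_contra h2; exact h n (by omega) hn⟩

theorem measurableSet_infpri (pri : S → ℕ) (n : ℕ) :
    MeasurableSet {u : PathSpace S | {i | pri (u i) = n}.Infinite} := by
  have : {u : PathSpace S | {i | pri (u i) = n}.Infinite} =
      ⋂ m : ℕ, ⋃ i : ℕ, ⋃ _ : m < i, {u : PathSpace S | pri (u i) = n} := by
    ext u
    simp only [Set.mem_setOf_eq, Set.mem_iInter, Set.mem_iUnion]
    rw [Set.infinite_iff_exists_gt]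
    refine forall_congr' fun m => ?_
    simp only [Set.mem_setOf_eq]
    constructor
    · rintro ⟨i, h1, h2⟩; exact ⟨i, h2, h1⟩
    · rintro ⟨i, h1, h2⟩; exact ⟨i, h2, h1⟩
  rw [this]
  exact MeasurableSet.iInter fun m => MeasurableSet.iUnion fun i => MeasurableSet.iUnion fun _ =>
    measurableSet_coord i (fun s => pri s = n)

theorem measurableSet_even (pri : S → ℕ) :
    MeasurableSet {u : PathSpace S | Even (sSup {n | {i | pri (u i) = n}.Infinite})} := by
  have hI := measurableSet_infpri pri
  simp only [even_sSup_iff, Set.mem_setOf_eq]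
  apply MeasurableSet.union
  · have : {u : PathSpace S | ∀ m : ℕ, ∃ n, m < n ∧ {i | pri (u i) = n}.Infinite} =
        ⋂ m : ℕ, ⋃ n : ℕ, ⋃ _ : m < n, {u : PathSpace S | {i | pri (u i) = n}.Infinite} := by
      ext u; simp
    refine (congrArg MeasurableSet this).mpr ?_
    exact MeasurableSet.iInter fun m => MeasurableSet.iUnion fun i =>
      MeasurableSet.iUnion fun _ => hI _
  apply MeasurableSet.union
  · have : {u : PathSpace S | ∀ n, ¬ {i | pri (u i) = n}.Infinite} =
        ⋂ n : ℕ, {u : PathSpace S | {i | pri (u i) = n}.Infinite}ᶜ := by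
      ext u; simp
    refine (congrArg MeasurableSet this).mpr ?_
    exact MeasurableSet.iInter fun m => (hI _).compl
  · have : {u : PathSpace S | ∃ k, Even k ∧ {i | pri (u i) = k}.Infinite ∧
          ∀ n, {i | pri (u i) = n}.Infinite → n ≤ k} =
        ⋃ k : ℕ, ⋃ _ : Even k, ({u : PathSpace S | {i | pri (u i) = k}.Infinite} ∩
          ⋂ n : ℕ, ⋂ _ : ¬ n ≤ k, {u : PathSpace S | {i | pri (u i) = n}.Infinite}ᶜ) := by
      ext u
      simp only [Set.mem_setOf_eq, Set.mem_iUnion, Set.mem_inter_iff, Set.mem_iInter,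
        Set.mem_compl_iff, exists_prop]
      refine exists_congr fun k => and_congr_right fun _ => and_congr_right fun _ =>
        forall_congr' fun n => by tauto
    refine (congrArg MeasurableSet this).mpr ?_
    exact MeasurableSet.iUnion fun k => MeasurableSet.iUnion fun _ =>
      (hI _).inter (MeasurableSet.iInter fun n => MeasurableSet.iInter fun _ => (hI _).compl)

theorem payoff_of_first (A : Arena S) (pri : S → ℕ) (R : S → ℝ) (u : PathSpace S) (i : ℕ)
    (h : A.E (u i) = ∅) (h2 : ∀ j < i, A.E (u j) ≠ ∅) : payoff A pri R u = R (u i) := by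
  have hex : ∃ i, A.E (u i) = ∅ := ⟨i, h⟩
  rw [payoff, dif_pos hex]
  have : Nat.find hex = i := (Nat.find_eq_iff hex).2 ⟨h, h2⟩
  rw [this]

theorem payoff_of_none (A : Arena S) (pri : S → ℕ) (R : S → ℝ) (u : PathSpace S)
    (h : ∀ i, A.E (u i) ≠ ∅) : payoff A pri R u =
      if Even (sSup {n | {i | pri (u i) = n}.Infinite}) then 1 else 0 := by
  rw [payoff, dif_neg (by push Not; exact fun i => Set.nonempty_iff_ne_empty.2 (h i))]

theorem measurable_payoff (A : Arena S) (pri : S → ℕ) (R : S → ℝ) :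
    Measurable (payoff A pri R) := by
  intro B _
  have e : payoff A pri R ⁻¹' B =
      (⋃ i : ℕ, ({u : PathSpace S | A.E (u i) = ∅ ∧ R (u i) ∈ B} ∩
        ⋂ j : ℕ, ⋂ _ : j < i, {u : PathSpace S | A.E (u j) ≠ ∅})) ∪
      ((⋂ i : ℕ, {u : PathSpace S | A.E (u i) ≠ ∅}) ∩
        {u : PathSpace S | (if Even (sSup {n | {i | pri (u i) = n}.Infinite}) then (1:ℝ) else 0) ∈ B}) := by
    ext u
    simp only [Set.mem_preimage, Set.mem_union, Set.mem_iUnion, Set.mem_inter_iff, Set.mem_iInter,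
      Set.mem_setOf_eq]
    by_cases h : ∃ i, A.E (u i) = ∅
    · have hs := Nat.find_spec h
      have hm : ∀ j < Nat.find h, A.E (u j) ≠ ∅ := fun j hj => Nat.find_min h hj
      rw [payoff_of_first A pri R u _ hs hm]
      constructor
      · intro h2; exact Or.inl ⟨_, ⟨hs, h2⟩, hm⟩
      · rintro (⟨i, ⟨h1, h2⟩, h3⟩ | ⟨h1, _⟩)
        · have := (Nat.find_eq_iff h).2 ⟨h1, h3⟩
          rwa [this]
        · exact absurd hs (h1 _)
    · push Not at h
      have h' : ∀ i, A.E (u i) ≠ ∅ := fun i => Set.nonempty_iff_ne_empty.1 (h i)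
      rw [payoff_of_none A pri R u h']
      constructor
      · intro h2; exact Or.inr ⟨h', h2⟩
      · rintro (⟨i, ⟨h1, h2⟩, h3⟩ | ⟨_, h1⟩)
        · exact absurd h1 (h' i)
        · exact h1
  rw [e]
  apply MeasurableSet.union
  · exact MeasurableSet.iUnion fun i => (measurableSet_coord i (fun s => A.E s = ∅ ∧ R s ∈ B)).inter
      (MeasurableSet.iInter fun j => MeasurableSet.iInter fun _ =>
        measurableSet_coord j (fun s => A.E s ≠ ∅))
  · refine (MeasurableSet.iInter fun j => measurableSet_coord j (fun s => A.E s ≠ ∅)).inter ?_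
    have hE := measurableSet_even pri
    have hm : Measurable (fun u : PathSpace S =>
        (if Even (sSup {n | {i | pri (u i) = n}.Infinite}) then (1:ℝ) else 0)) :=
      Measurable.ite hE measurable_const measurable_const
    exact hm ‹_›

theorem payoff_mem (A : Arena S) (pri : S → ℕ) {R : S → ℝ} (hR : ∀ s, R s ∈ Set.Icc (0:ℝ) 1)
    (u : PathSpace S) : payoff A pri R u ∈ Set.Icc (0:ℝ) 1 := by
  unfold payoff
  split_ifs
  · exact hR _
  · simp
  · simp

open MeasureTheory in
theorem integrable_payoff (A : Arena S) (pri : S → ℕ) {R : S → ℝ} (hR : ∀ s, R s ∈ Set.Icc (0:ℝ) 1)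
    (μ : Measure (PathSpace S)) [IsFiniteMeasure μ] : Integrable (payoff A pri R) μ := by
  refine Integrable.of_bound (measurable_payoff A pri R).aestronglyMeasurable 1 ?_
  filter_upwards with u
  have := payoff_mem A pri hR u
  rw [Real.norm_eq_abs, abs_le]
  exact ⟨by linarith [this.1], this.2⟩

open MeasureTheory in
theorem expReward_mem {A : Arena S} (hA : A.Wellformed) (pri : S → ℕ) {R : S → ℝ}
    (hR : ∀ s, R s ∈ Set.Icc (0:ℝ) 1) (σ1 : Strategy A Player.one)
    (σ2 : Strategy A Player.two) (s : S) : expReward A pri R σ1 σ2 s ∈ Set.Icc (0:ℝ) 1 := by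
  obtain ⟨p, _⟩ := pathMeasure_spec hA σ1 σ2 s
  constructor
  · exact integral_nonneg fun u => (payoff_mem A pri hR u).1
  · have := integral_mono (integrable_payoff A pri hR (pathMeasure A σ1 σ2 s))
      (integrable_const (1:ℝ)) (fun u => (payoff_mem A pri hR u).2)
    simpa [expReward] using this

theorem payoff_consP (A : Arena S) (pri : S → ℕ) (R : S → ℝ) (a : S) (ha : A.E a ≠ ∅)
    (u : PathSpace S) : payoff A pri R (consP a u) = payoff A pri R u := by
  by_cases h : ∃ i, A.E (u i) = ∅
  · have hs := Nat.find_spec h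
    have hm : ∀ j < Nat.find h, A.E (u j) ≠ ∅ := fun j hj => Nat.find_min h hj
    rw [payoff_of_first A pri R u _ hs hm]
    refine payoff_of_first A pri R (consP a u) (Nat.find h + 1) hs ?_
    intro j hj
    cases j with
    | zero => exact ha
    | succ j => exact hm j (by omega)
  · have h' : ∀ i, A.E (u i) ≠ ∅ := fun i hi => h ⟨i, hi⟩
    rw [payoff_of_none A pri R u h', payoff_of_none A pri R (consP a u)]
    · have : ∀ n, {i | pri (consP a u i) = n}.Infinite ↔ {i | pri (u i) = n}.Infinite := by
        intro n
        rw [← not_iff_not, Set.not_infinite, Set.not_infinite]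
        constructor
        · intro hf
          have := hf.preimage (f := Nat.succ) (Nat.succ_injective.injOn)
          exact this
        · intro hf
          refine ((hf.image Nat.succ).union (Set.finite_singleton 0)).subset ?_
          rintro (_ | i) hi
          · right; rfl
          · left; exact ⟨i, hi, rfl⟩
      simp only [this]
    · intro j
      cases j with
      | zero => exact ha
      | succ j => exact h' j

theorem payoff_prep (A : Arena S) (pri : S → ℕ) (R : S → ℝ) (h : List S) (hh : ∀ a ∈ h, A.E a ≠ ∅)
    (u : PathSpace S) : payoff A pri R (prep h u) = payoff A pri R u := by
  induction h with
  | nil => rfl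
  | cons a h ih =>
    rw [prep, payoff_consP A pri R a (hh a (by simp)), ih (fun b hb => hh b (by simp [hb]))]

/-! ### Cutting an arena at a set of states -/

/-- `A'` is obtained from `A` by making the states of `T` terminal; in `A` a state `t` of `T`
has the single successor `nx t` -/
structure Cut (A A' : Arena S) (T : Set S) (nx : S → S) : Prop where
  wf : A.Wellformed
  wf' : A'.Wellformed
  term : ∀ t ∈ T, A'.E t = ∅
  single : ∀ t ∈ T, A.E t = {nx t}
  off : ∀ s, s ∉ T → A'.E s = A.E s
  owner : ∀ s, A'.owner s = A.owner s
  prob : ∀ s t, A'.prob s t = A.prob s t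

/-- strategies agreeing before `T` is visited -/
def Agree {A A' : Arena S} {pl : Player} (T : Set S) (σ0 : Strategy A pl) (τ0 : Strategy A' pl) :
    Prop :=
  ∀ hist s, (∀ y ∈ hist, y ∉ T) → s ∉ T → σ0.next hist s = τ0.next hist s

/-- stop a path when it enters `T` -/
def stp (T : Set S) (u : PathSpace S) : PathSpace S
  | 0 => u 0
  | n+1 => if stp T u n ∈ T then stp T u n else u (n+1)

theorem stp_eq (T : Set S) (u : PathSpace S) (n : ℕ) (h : ∀ j < n, u j ∉ T) : stp T u n = u n := by
  induction n with
  | zero => rfl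
  | succ n ih =>
    rw [stp, ih (fun j hj => h j (by omega)), if_neg (h n (by omega))]

theorem stp_succ_of_mem (T : Set S) (u : PathSpace S) (n : ℕ) (h : stp T u n ∈ T) :
    stp T u (n+1) = stp T u n := by rw [stp, if_pos h]

theorem stp_stay (T : Set S) (u : PathSpace S) (n k : ℕ) (h : stp T u n ∈ T) :
    stp T u (n+k) = stp T u n := by
  induction k with
  | zero => rfl
  | succ k ih => rw [← add_assoc, stp_succ_of_mem _ _ _ (by rw [ih]; exact h), ih]

theorem measurable_stp (T : Set S) : Measurable (stp T) := by
  apply measurable_path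
  intro n
  let _ : MeasurableSpace S := ⊤
  have key : ∀ n, ∀ B : Set S, MeasurableSet {u : PathSpace S | stp T u n ∈ B} := by
    intro n
    induction n with
    | zero => intro B; exact measurableSet_coord 0 (fun s => s ∈ B)
    | succ n ih =>
      intro B
      have : {u : PathSpace S | stp T u (n+1) ∈ B} =
          {u : PathSpace S | stp T u n ∈ T ∩ B} ∪
          ({u : PathSpace S | stp T u n ∈ Tᶜ} ∩ {u : PathSpace S | u (n+1) ∈ B}) := by
        ext u
        change stp T u (n+1) ∈ B ↔ (stp T u n ∈ T ∧ stp T u n ∈ B) ∨ (stp T u n ∉ T ∧ u (n+1) ∈ B)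
        rw [stp]
        split_ifs with h <;> tauto
      rw [this]
      exact (ih _).union ((ih _).inter (measurableSet_coord (n+1) (fun s => s ∈ B)))
  intro B _
  exact key n B

theorem stepW_cut {A A' : Arena S} {T : Set S} {nx : S → S} (hc : Cut A A' T nx)
    {σ1 : Strategy A Player.one} {σ2 : Strategy A Player.two}
    {τ1 : Strategy A' Player.one} {τ2 : Strategy A' Player.two} (h1 : Agree T σ1 τ1)
    (h2 : Agree T σ2 τ2) (l : List S) (s t : S) (hl : ∀ y ∈ l, y ∉ T) (hs : s ∉ T) :
    stepW A σ1 σ2 l s t = stepW A' τ1 τ2 l s t := by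
  unfold stepW
  rw [hc.off s hs, hc.owner s, h1 l s hl hs, h2 l s hl hs, hc.prob]

theorem cw_cut {A A' : Arena S} {T : Set S} {nx : S → S} (hc : Cut A A' T nx)
    {σ1 : Strategy A Player.one} {σ2 : Strategy A Player.two}
    {τ1 : Strategy A' Player.one} {τ2 : Strategy A' Player.two} (h1 : Agree T σ1 τ1)
    (h2 : Agree T σ2 τ2) (s0 : S) (l : List S) (s : S) (hl : ∀ y ∈ l, y ∉ T) :
    cw A σ1 σ2 s0 (l ++ [s]) = cw A' τ1 τ2 s0 (l ++ [s]) := by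
  induction l using List.reverseRecOn generalizing s with
  | nil => rw [List.nil_append, cw_single, cw_single]
  | append_singleton l x ih =>
    rw [List.append_assoc, List.singleton_append, cw_snoc hc.wf, cw_snoc hc.wf',
      ih x (fun y hy => hl y (by simp [hy])),
      stepW_cut hc h1 h2 l x s (fun y hy => hl y (by simp [hy])) (hl x (by simp))]

theorem pre_stp (T : Set S) (u : PathSpace S) (l : List S) (x : S) (hl : ∀ y ∈ l, y ∉ T) :
    stp T u ∈ cyl (l ++ [x]) ↔ u ∈ cyl (l ++ [x]) := by
  induction l using List.reverseRecOn generalizing x with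
  | nil =>
    rw [mem_cyl_snoc, mem_cyl_snoc, cyl_nil]; rfl
  | append_singleton l z ih =>
    rw [mem_cyl_snoc _ (l ++ [z]), mem_cyl_snoc _ (l ++ [z]), ih z (fun y hy => hl y (by simp [hy]))]
    refine and_congr_right fun hu => ?_
    rw [stp_eq]
    intro j hj
    rw [mem_cyl_iff] at hu
    apply hl
    rw [← hu]
    simp only [pre, List.mem_map, List.mem_range]
    exact ⟨j, hj, rfl⟩

theorem stp_cyl_T (T : Set S) (u : PathSpace S) (l : List S) (s : S) (hs : s ∈ T) (t : S) :
    stp T u ∈ cyl (l ++ [s, t]) ↔ stp T u ∈ cyl (l ++ [s]) ∧ t = s := by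
  rw [show l ++ [s, t] = (l ++ [s]) ++ [t] by simp, mem_cyl_snoc]
  refine and_congr_right fun h => ?_
  rw [mem_cyl_snoc] at h
  rw [List.length_append, List.length_singleton, stp_succ_of_mem _ _ _ (by rw [h.2]; exact hs), h.2]
  exact eq_comm

theorem stp_cyl_stay (T : Set S) (u : PathSpace S) (l : List S) (s y : S) (hy : y ∈ l) (hyT : y ∈ T)
    (h : stp T u ∈ cyl (l ++ [s])) : s = y := by
  induction l using List.reverseRecOn generalizing s with
  | nil => simp at hy
  | append_singleton l x ih =>
    rw [List.append_assoc, List.singleton_append] at h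
    have hxy : x = y := by
      rcases List.mem_append.1 hy with hy | hy
      · have := cyl_append_subset (l ++ [x]) [s]
        exact ih x hy (this (by simpa using h))
      · exact (List.mem_singleton.1 hy).symm
    subst hxy
    exact ((stp_cyl_T T u l x hyT s).1 h).2

open MeasureTheory in
theorem map_stp {A A' : Arena S} {T : Set S} {nx : S → S} (hc : Cut A A' T nx)
    {σ1 : Strategy A Player.one} {σ2 : Strategy A Player.two}
    {τ1 : Strategy A' Player.one} {τ2 : Strategy A' Player.two} (h1 : Agree T σ1 τ1)
    (h2 : Agree T σ2 τ2) (s0 : S) :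
    (pathMeasure A σ1 σ2 s0).map (stp T) = pathMeasure A' τ1 τ2 s0 := by
  obtain ⟨p1, w1⟩ := pathMeasure_spec hc.wf σ1 σ2 s0
  obtain ⟨p2, w2⟩ := pathMeasure_spec hc.wf' τ1 τ2 s0
  have pm := Measure.isProbabilityMeasure_map (μ := pathMeasure A σ1 σ2 s0)
    (measurable_stp T).aemeasurable
  refine (cw_tree hc.wf' τ1 τ2 s0).unique _ _ ?_ w2
  intro l
  rw [Measure.map_apply (measurable_stp T) (measurableSet_cyl l)]
  induction l using List.reverseRecOn with
  | nil => rw [cyl_nil]; simp [cw, p1.measure_univ]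
  | append_singleton l x ih =>
    by_cases hl : ∀ y ∈ l, y ∉ T
    · have : stp T ⁻¹' cyl (l ++ [x]) = cyl (l ++ [x]) := by
        ext u; exact pre_stp T u l x hl
      rw [this, w1, cw_cut hc h1 h2 s0 l x hl]
    · push Not at hl
      obtain ⟨y, hy, hyT⟩ := hl
      obtain rfl | ⟨l', z, rfl⟩ := l.eq_nil_or_concat'
      · simp at hy
      · by_cases hz : z ∈ T
        · rw [List.append_assoc, List.singleton_append, cw_snoc hc.wf']
          rw [← ih]
          by_cases hx : x = z
          · have : stp T ⁻¹' cyl (l' ++ [z, x]) = stp T ⁻¹' cyl (l' ++ [z]) := by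
              ext u
              refine (stp_cyl_T T u l' z hz x).trans ?_
              simp [hx]
            rw [this, stepW, if_pos (hc.term z hz), if_pos hx]
            simp
          · have : stp T ⁻¹' cyl (l' ++ [z, x]) = ∅ := by
              ext u
              refine (stp_cyl_T T u l' z hz x).trans ?_
              simp [hx]
            rw [this, stepW, if_pos (hc.term z hz), if_neg hx]
            simp
        · have hy' : y ∈ l' := by
            rcases List.mem_append.1 hy with hy | hy
            · exact hy
            · rw [List.mem_singleton.1 hy] at hyT; exact absurd hyT hz
          have hne : z ≠ y := fun e => hz (e ▸ hyT)
          have e1 : cw A' τ1 τ2 s0 (l' ++ [z]) = 0 := by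
            by_contra h
            exact hne (cw_terminal hc.wf' τ1 τ2 s0 l' z y h hy' (hc.term y hyT))
          have e2 : stp T ⁻¹' cyl (l' ++ [z] ++ [x]) = ∅ := by
            ext u
            refine ⟨fun h => ?_, fun h => h.elim⟩
            exact hne (stp_cyl_stay T u l' z y hy' hyT (cyl_append_subset _ _ h))
          rw [e2, List.append_assoc, List.singleton_append, cw_snoc hc.wf', e1]
          simp

theorem mem_of_cyl {u : PathSpace S} {l : List S} (hu : u ∈ cyl l) {j : ℕ} (hj : j < l.length) :
    u j ∈ l := by
  rw [mem_cyl_iff] at hu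
  rw [← hu]
  simp only [pre, List.mem_map, List.mem_range]
  exact ⟨j, hj, rfl⟩

theorem payoff_stp_hit {A A' : Arena S} {T : Set S} {nx : S → S} (hc : Cut A A' T nx)
    (pri' : S → ℕ) (R' : S → ℝ) (h : List S) (t : S) (hh : ∀ y ∈ h, y ∉ T)
    (hE : ∀ y ∈ h, A.E y ≠ ∅) (ht : t ∈ T) (u : PathSpace S) (hu : u ∈ cyl (h ++ [t])) :
    payoff A' pri' R' (stp T u) = R' t := by
  rw [mem_cyl_snoc] at hu
  have e : ∀ j, j ≤ h.length → stp T u j = u j := fun j hj =>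
    stp_eq T u j (fun k hk => hh _ (mem_of_cyl hu.1 (by omega)))
  rw [payoff_of_first A' pri' R' (stp T u) h.length, e _ le_rfl, hu.2]
  · rw [e _ le_rfl, hu.2, hc.term t ht]
  · intro j hj
    have hm := mem_of_cyl hu.1 hj
    rw [e j hj.le, hc.off _ (hh _ hm)]
    exact hE _ hm

theorem payoff_stp_never {A A' : Arena S} {T : Set S} {nx : S → S} (hc : Cut A A' T nx)
    (pri pri' : S → ℕ) (R R' : S → ℝ) (hp : ∀ s, s ∉ T → pri' s = pri s)
    (hR : ∀ s, s ∉ T → R' s = R s) (u : PathSpace S) (hu : ∀ i, u i ∉ T) :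
    payoff A' pri' R' (stp T u) = payoff A pri R u := by
  have e : stp T u = u := funext fun n => stp_eq T u n (fun j _ => hu j)
  rw [e]
  by_cases h : ∃ i, A.E (u i) = ∅
  · have hs := Nat.find_spec h
    have hm : ∀ j < Nat.find h, A.E (u j) ≠ ∅ := fun j hj => Nat.find_min h hj
    rw [payoff_of_first A pri R u _ hs hm, payoff_of_first A' pri' R' u (Nat.find h), hR _ (hu _)]
    · rw [hc.off _ (hu _)]; exact hs
    · intro j hj; rw [hc.off _ (hu _)]; exact hm j hj
  · have h' : ∀ i, A.E (u i) ≠ ∅ := fun i hi => h ⟨i, hi⟩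
    rw [payoff_of_none A pri R u h', payoff_of_none A' pri' R' u]
    · simp only [hp _ (hu _)]
    · intro i; rw [hc.off _ (hu _)]; exact h' i

theorem step_T {A A' : Arena S} {T : Set S} {nx : S → S} (hc : Cut A A' T nx)
    (σ1 : Strategy A Player.one) (σ2 : Strategy A Player.two) (l : List S) (t x : S) (ht : t ∈ T)
    (h : stepW A σ1 σ2 l t x ≠ 0) : x = nx t := by
  have hne : A.E t ≠ ∅ := by rw [hc.single t ht]; simp
  have v1 := σ1.valid l t
  have v2 := σ2.valid l t
  rw [stepW, if_neg hne] at h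
  cases ho : A.owner t with
  | one =>
    have := v1 ho hne
    rw [hc.single t ht] at this
    rw [ho] at h
    simp at h; rw [h]; exact this
  | two =>
    have := v2 ho hne
    rw [hc.single t ht] at this
    rw [ho] at h
    simp at h; rw [h]; exact this
  | nature =>
    exact absurd (hc.term t ht) (nature_nonterm hc.wf' ((hc.owner t).trans ho))

open MeasureTheory in
theorem compare {A A' : Arena S} {T : Set S} {nx : S → S} (hc : Cut A A' T nx)
    (pri pri' : S → ℕ) (R R' : S → ℝ) (hp : ∀ s, s ∉ T → pri' s = pri s)
    (hRR : ∀ s, s ∉ T → R' s = R s) (hR : ∀ s, R s ∈ Set.Icc (0:ℝ) 1)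
    (hR' : ∀ s, R' s ∈ Set.Icc (0:ℝ) 1)
    {σ1 : Strategy A Player.one} {σ2 : Strategy A Player.two}
    {τ1 : Strategy A' Player.one} {τ2 : Strategy A' Player.two} (h1 : Agree T σ1 τ1)
    (h2 : Agree T σ2 τ2) (s0 : S) (c ε : ℝ) (hε : 0 ≤ ε)
    (H : ∀ h t, (∀ y ∈ h, y ∉ T) → t ∈ T →
      c * (expReward A pri R (σ1.shift (h ++ [t])) (σ2.shift (h ++ [t])) (nx t) - R' t) ≤ ε) :
    c * (expReward A pri R σ1 σ2 s0 - expReward A' pri' R' τ1 τ2 s0) ≤ ε := by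
  obtain ⟨p1, w1⟩ := pathMeasure_spec hc.wf σ1 σ2 s0
  obtain ⟨p2, w2⟩ := pathMeasure_spec hc.wf' τ1 τ2 s0
  have tr := cw_tree hc.wf σ1 σ2 s0
  have hm1 := measurable_payoff A pri R
  have hm2 := (measurable_payoff A' pri' R').comp (measurable_stp T)
  have hi1 := integrable_payoff A pri hR (pathMeasure A σ1 σ2 s0)
  have hi2 : Integrable (fun u => payoff A' pri' R' (stp T u)) (pathMeasure A σ1 σ2 s0) := by
    have := integrable_payoff A' pri' hR' (pathMeasure A' τ1 τ2 s0)
    rw [← map_stp hc h1 h2 s0] at this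
    exact this.comp_measurable (measurable_stp T)
  have eE' : expReward A' pri' R' τ1 τ2 s0 =
      ∫ u, payoff A' pri' R' (stp T u) ∂(pathMeasure A σ1 σ2 s0) := by
    unfold expReward
    rw [← map_stp hc h1 h2 s0]
    exact integral_map (measurable_stp T).aemeasurable (measurable_payoff A' pri' R').aestronglyMeasurable
  set g : PathSpace S → ℝ := fun u => c * (payoff A pri R u - payoff A' pri' R' (stp T u)) - ε with hg
  have hgm : Measurable g := ((hm1.sub hm2).const_mul c).sub measurable_const
  have hgi : Integrable g (pathMeasure A σ1 σ2 s0) :=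
    ((hi1.sub hi2).const_mul c).sub (integrable_const ε)
  have eg : ∫ u, g u ∂(pathMeasure A σ1 σ2 s0) =
      c * (expReward A pri R σ1 σ2 s0 - expReward A' pri' R' τ1 τ2 s0) - ε := by
    have q : Integrable (fun u => c * (payoff A pri R u - payoff A' pri' R' (stp T u)))
      (pathMeasure A σ1 σ2 s0) := (hi1.sub hi2).const_mul c
    simp only [hg]
    rw [eE', integral_sub q (integrable_const ε), integral_const_mul,
      integral_sub hi1 hi2]
    simp [expReward]
  suffices hle : ∫ u, g u ∂(pathMeasure A σ1 σ2 s0) ≤ 0 by rw [eg] at hle; linarith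
  set K : Set (List S) := {l | cw A σ1 σ2 s0 l ≠ 0 ∧ ∃ h t, l = h ++ [t, nx t] ∧ (∀ y ∈ h, y ∉ T) ∧
    t ∈ T} with hK
  have hKc : K.Countable := by
    refine Set.Countable.mono ?_ (Set.countable_iUnion fun n => tr.countable_len n)
    intro l hl
    exact Set.mem_iUnion.2 ⟨l.length, rfl, hl.1⟩
  have : Countable K := hKc.to_subtype
  have hdisj : Pairwise (Function.onFun Disjoint (fun l : K => cyl l.1)) := by
    rintro ⟨l, hl0, h, t, rfl, hh, ht⟩ ⟨l', hl0', h', t', rfl, hh', ht'⟩ hne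
    rw [Function.onFun, Set.disjoint_left]
    intro u hu hu'
    apply hne
    have q1 : u ∈ cyl (h ++ [t]) := cyl_append_subset (h ++ [t]) [nx t] (by simpa using hu)
    have q2 : u ∈ cyl (h' ++ [t']) := cyl_append_subset (h' ++ [t']) [nx t'] (by simpa using hu')
    rw [mem_cyl_snoc] at q1 q2
    have hlen : h.length = h'.length := by
      rcases lt_trichotomy h.length h'.length with q | q | q
      · have := hh' _ (mem_of_cyl q2.1 q)
        rw [q1.2] at this; exact absurd ht this
      · exact q
      · have := hh _ (mem_of_cyl q1.1 q)
        rw [q2.2] at this; exact absurd ht' this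
    have := (mem_cyl_iff u (h ++ [t, nx t])).1 hu
    have h3 := (mem_cyl_iff u (h' ++ [t', nx t'])).1 hu'
    apply Subtype.ext
    change h ++ [t, nx t] = h' ++ [t', nx t']
    rw [← this, ← h3]
    simp [hlen]
  set U : Set (PathSpace S) := ⋃ l : K, cyl l.1 with hU
  have hUm : MeasurableSet U := MeasurableSet.iUnion fun l => measurableSet_cyl l.1
  rw [← integral_add_compl hUm hgi]
  have a1 : ∫ u in U, g u ∂(pathMeasure A σ1 σ2 s0) ≤ 0 := by
    rw [hU, integral_iUnion (fun l : K => measurableSet_cyl l.1) hdisj hgi.integrableOn]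
    apply tsum_nonpos
    rintro ⟨l, hl0, h, t, rfl, hh, ht⟩
    change ∫ u in cyl (h ++ [t, nx t]), g u ∂(pathMeasure A σ1 σ2 s0) ≤ 0
    have hne : A.E t ≠ ∅ := by rw [hc.single t ht]; simp
    have hE : ∀ y ∈ h, A.E y ≠ ∅ := by
      intro y hy hy0
      rw [cw_snoc hc.wf] at hl0
      have := cw_terminal hc.wf σ1 σ2 s0 h t y (mul_ne_zero_iff.1 hl0).1 hy hy0
      exact hne (this ▸ hy0)
    have hE2 : ∀ y ∈ h ++ [t], A.E y ≠ ∅ := by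
      intro y hy
      rcases List.mem_append.1 hy with hy | hy
      · exact hE y hy
      · rw [List.mem_singleton.1 hy]; exact hne
    rw [show h ++ [t, nx t] = (h ++ [t]) ++ [nx t] by simp, restrict_cyl hc.wf, integral_smul_measure,
      integral_map (measurable_prep _).aemeasurable hgm.aestronglyMeasurable]
    obtain ⟨p3, w3⟩ := pathMeasure_spec hc.wf (σ1.shift (h ++ [t])) (σ2.shift (h ++ [t])) (nx t)
    have e : ∀ v, g (prep (h ++ [t]) v) = c * (payoff A pri R v - R' t) - ε := by
      intro v
      rw [hg]
      change c * (payoff A pri R (prep (h ++ [t]) v) -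
        payoff A' pri' R' (stp T (prep (h ++ [t]) v))) - ε = _
      rw [payoff_prep A pri R _ hE2, payoff_stp_hit hc pri' R' h t hh hE ht _ (prep_mem_cyl' _ _)]
    simp only [e]
    have hi3 := integrable_payoff A pri hR
      (pathMeasure A (σ1.shift (h ++ [t])) (σ2.shift (h ++ [t])) (nx t))
    have q : Integrable (fun u => c * (payoff A pri R u - R' t))
      (pathMeasure A (σ1.shift (h ++ [t])) (σ2.shift (h ++ [t])) (nx t)) :=
      (hi3.sub (integrable_const _)).const_mul c
    rw [integral_sub q (integrable_const ε),
      integral_const_mul, integral_sub hi3 (integrable_const _)]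
    have := H h t hh ht
    unfold expReward at this
    simp only [integral_const, probReal_univ, one_smul]
    exact mul_nonpos_of_nonneg_of_nonpos ENNReal.toReal_nonneg (by linarith)
  have a2 : ∫ u in Uᶜ, g u ∂(pathMeasure A σ1 σ2 s0) ≤ 0 := by
    apply setIntegral_nonpos_of_ae_restrict
    rw [Filter.EventuallyLE, ae_restrict_iff' hUm.compl]
    filter_upwards [tr.ae_ne_zero _ w1] with u hu huU
    have hnever : ∀ i, u i ∉ T := by
      by_contra hex
      push Not at hex
      have hs := Nat.find_spec hex
      have hmn : ∀ j < Nat.find hex, u j ∉ T := fun j hj => Nat.find_min hex hj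
      set i := Nat.find hex
      apply huU
      have e : pre u (i+2) = pre u i ++ [u i, u (i+1)] := by
        rw [pre_succ, pre_succ]; simp
      have hw := hu (i+2)
      have hw' := hw
      rw [e, cw_snoc hc.wf] at hw
      have hst := step_T hc σ1 σ2 (pre u i) (u i) (u (i+1)) hs (by
        intro h0
        exact (mul_ne_zero_iff.1 hw).2 (by rw [h0]; simp))
      rw [hst] at e
      refine Set.mem_iUnion.2 ⟨⟨pre u (i+2), hw', pre u i, u i, e, ?_, hs⟩, ?_⟩
      · intro y hy
        simp only [pre, List.mem_map, List.mem_range] at hy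
        obtain ⟨j, hj, rfl⟩ := hy
        exact hmn j hj
      · exact (mem_cyl_iff _ _).2 (by rw [pre_length])
    change c * (payoff A pri R u - payoff A' pri' R' (stp T u)) - ε ≤ 0
    rw [payoff_stp_never hc pri pri' R R' hp hRR u hnever]
    simp [hε]
  linarith

/-! ### Inf/sup bookkeeping -/

section minmax
variable {α β : Type} [Nonempty α] [Nonempty β] {f : α → β → ℝ}

theorem bddB (hf : ∀ a b, f a b ∈ Set.Icc (0:ℝ) 1) (a : α) : BddBelow (Set.range fun b => f a b) :=
  ⟨0, by rintro _ ⟨b, rfl⟩; exact (hf a b).1⟩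

theorem bddA (hf : ∀ a b, f a b ∈ Set.Icc (0:ℝ) 1) (b : β) : BddAbove (Set.range fun a => f a b) :=
  ⟨1, by rintro _ ⟨a, rfl⟩; exact (hf a b).2⟩

theorem bddL (hf : ∀ a b, f a b ∈ Set.Icc (0:ℝ) 1) : BddAbove (Set.range fun a => ⨅ b, f a b) :=
  ⟨1, by
    rintro _ ⟨a, rfl⟩
    exact (ciInf_le (bddB hf a) (Classical.arbitrary β)).trans (hf _ _).2⟩

theorem bddU (hf : ∀ a b, f a b ∈ Set.Icc (0:ℝ) 1) : BddBelow (Set.range fun b => ⨆ a, f a b) :=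
  ⟨0, by
    rintro _ ⟨b, rfl⟩
    exact (hf _ _).1.trans (le_ciSup (bddA hf b) (Classical.arbitrary α))⟩

theorem lower_exists (_ : ∀ a b, f a b ∈ Set.Icc (0:ℝ) 1) {ε : ℝ} (hε : 0 < ε) :
    ∃ a, ∀ b, (⨆ a, ⨅ b, f a b) - ε ≤ f a b := by
  obtain ⟨a, ha⟩ := exists_lt_of_lt_ciSup (show (⨆ a, ⨅ b, f a b) - ε < ⨆ a, ⨅ b, f a b by linarith)
  exact ⟨a, fun b => ha.le.trans (ciInf_le (bddB ‹_› a) b)⟩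

theorem lower_resp (hf : ∀ a b, f a b ∈ Set.Icc (0:ℝ) 1) {ε : ℝ} (hε : 0 < ε) (a : α) :
    ∃ b, f a b ≤ (⨆ a, ⨅ b, f a b) + ε := by
  obtain ⟨b, hb⟩ := exists_lt_of_ciInf_lt (show (⨅ b, f a b) < (⨆ a, ⨅ b, f a b) + ε by
    have := le_ciSup (bddL hf) a
    linarith)
  exact ⟨b, hb.le⟩

theorem lower_le (hf : ∀ a b, f a b ∈ Set.Icc (0:ℝ) 1) {x : ℝ} (h : ∀ a, ∃ b, f a b ≤ x) :
    (⨆ a, ⨅ b, f a b) ≤ x := by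
  refine ciSup_le fun a => ?_
  obtain ⟨b, hb⟩ := h a
  exact (ciInf_le (bddB hf a) b).trans hb

theorem le_lower (hf : ∀ a b, f a b ∈ Set.Icc (0:ℝ) 1) {x : ℝ} (a : α) (h : ∀ b, x ≤ f a b) :
    x ≤ (⨆ a, ⨅ b, f a b) :=
  (le_ciInf h).trans (le_ciSup (bddL hf) a)

theorem upper_exists (_ : ∀ a b, f a b ∈ Set.Icc (0:ℝ) 1) {ε : ℝ} (hε : 0 < ε) :
    ∃ b, ∀ a, f a b ≤ (⨅ b, ⨆ a, f a b) + ε := by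
  obtain ⟨b, hb⟩ := exists_lt_of_ciInf_lt (show (⨅ b, ⨆ a, f a b) < (⨅ b, ⨆ a, f a b) + ε by linarith)
  exact ⟨b, fun a => (le_ciSup (bddA ‹_› b) a).trans hb.le⟩

theorem upper_resp (hf : ∀ a b, f a b ∈ Set.Icc (0:ℝ) 1) {ε : ℝ} (hε : 0 < ε) (b : β) :
    ∃ a, (⨅ b, ⨆ a, f a b) - ε ≤ f a b := by
  obtain ⟨a, ha⟩ := exists_lt_of_lt_ciSup (show (⨅ b, ⨆ a, f a b) - ε < (⨆ a, f a b) by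
    have := ciInf_le (bddU hf) b
    linarith)
  exact ⟨a, ha.le⟩

theorem le_upper (hf : ∀ a b, f a b ∈ Set.Icc (0:ℝ) 1) {x : ℝ} (h : ∀ b, ∃ a, x ≤ f a b) :
    x ≤ (⨅ b, ⨆ a, f a b) := by
  refine le_ciInf fun b => ?_
  obtain ⟨a, ha⟩ := h b
  exact ha.trans (le_ciSup (bddA hf b) a)

theorem upper_le (hf : ∀ a b, f a b ∈ Set.Icc (0:ℝ) 1) {x : ℝ} (b : β) (h : ∀ a, f a b ≤ x) :
    (⨅ b, ⨆ a, f a b) ≤ x :=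
  (ciInf_le (bddU hf) b).trans (ciSup_le h)

theorem lower_le_upper (hf : ∀ a b, f a b ∈ Set.Icc (0:ℝ) 1) :
    (⨆ a, ⨅ b, f a b) ≤ (⨅ b, ⨆ a, f a b) := by
  refine le_of_forall_pos_le_add fun ε hε => ?_
  obtain ⟨b, hb⟩ := upper_exists hf hε
  exact lower_le hf fun a => ⟨b, hb a⟩

theorem lower_mem (hf : ∀ a b, f a b ∈ Set.Icc (0:ℝ) 1) :
    (⨆ a, ⨅ b, f a b) ∈ Set.Icc (0:ℝ) 1 :=
  ⟨le_lower hf (Classical.arbitrary α) fun b => (hf _ b).1,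
    lower_le hf fun a => ⟨Classical.arbitrary β, (hf _ _).2⟩⟩

theorem upper_mem (hf : ∀ a b, f a b ∈ Set.Icc (0:ℝ) 1) :
    (⨅ b, ⨆ a, f a b) ∈ Set.Icc (0:ℝ) 1 :=
  ⟨le_upper hf fun b => ⟨Classical.arbitrary α, (hf _ b).1⟩,
    upper_le hf (Classical.arbitrary β) fun a => (hf _ _).2⟩

end minmax

/-! ### Composition of strategies -/

theorem strategy_nonempty (A : Arena S) (pl : Player) : Nonempty (Strategy A pl) :=
  ⟨⟨fun _ s => if h : (A.E s).Nonempty then h.choose else s, fun _ s _ h => by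
    have h' := Set.nonempty_iff_ne_empty.2 h
    simp only [dif_pos h']
    exact h'.choose_spec⟩⟩

/-- restrict a strategy to the cut arena -/
def resS {A A' : Arena S} {T : Set S} {nx : S → S} (hc : Cut A A' T nx) {pl : Player}
    (σ0 : Strategy A pl) : Strategy A' pl where
  next := σ0.next
  valid := by
    intro hist s ho hE
    have hs : s ∉ T := fun h => hE (hc.term s h)
    rw [hc.off s hs] at hE ⊢
    exact σ0.valid hist s ((hc.owner s).symm.trans ho) hE

theorem agree_res {A A' : Arena S} {T : Set S} {nx : S → S} (hc : Cut A A' T nx) {pl : Player}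
    (σ0 : Strategy A pl) : Agree T σ0 (resS hc σ0) := fun _ _ _ _ => rfl

/-- play `τ0` until `T` is visited, then the strategy given by `κ` -/
def compS {A A' : Arena S} {T : Set S} {nx : S → S} (hc : Cut A A' T nx) {pl : Player}
    (τ0 : Strategy A' pl) (κ : List S → Strategy A pl) : Strategy A pl where
  next := fun hist s =>
    match hist.dropWhile (fun y => decide (y ∉ T)) with
    | [] => if s ∈ T then nx s else τ0.next hist s
    | t :: rest => (κ (hist.takeWhile (fun y => decide (y ∉ T)) ++ [t])).next rest s
  valid := by
    intro hist s ho hE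
    split
    · split_ifs with hs
      · rw [hc.single s hs]; rfl
      · have := τ0.valid hist s ((hc.owner s).trans ho)
        rw [hc.off s hs] at this
        exact this hE
    · exact (κ _).valid _ s ho hE

theorem agree_comp {A A' : Arena S} {T : Set S} {nx : S → S} (hc : Cut A A' T nx) {pl : Player}
    (τ0 : Strategy A' pl) (κ : List S → Strategy A pl) : Agree T (compS hc τ0 κ) τ0 := by
  intro hist s hh hs
  have e : hist.dropWhile (fun y => decide (y ∉ T)) = [] := by
    rw [List.dropWhile_eq_nil_iff]
    intro y hy
    simpa using hh y hy
  simp only [compS, e, if_neg hs]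

theorem shift_comp {A A' : Arena S} {T : Set S} {nx : S → S} (hc : Cut A A' T nx) {pl : Player}
    (τ0 : Strategy A' pl) (κ : List S → Strategy A pl) (h : List S) (t : S) (hh : ∀ y ∈ h, y ∉ T)
    (ht : t ∈ T) : (compS hc τ0 κ).shift (h ++ [t]) = κ (h ++ [t]) := by
  have e : ∀ l, (h ++ [t] ++ l).dropWhile (fun y => decide (y ∉ T)) = t :: l := by
    intro l
    rw [List.append_assoc, List.dropWhile_append_of_pos (by intro y hy; simpa using hh y hy)]
    simp [ht]
  have e2 : ∀ l, (h ++ [t] ++ l).takeWhile (fun y => decide (y ∉ T)) = h := by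
    intro l
    rw [List.append_assoc, List.takeWhile_append_of_pos (by intro y hy; simpa using hh y hy)]
    simp [ht]
  have : ((compS hc τ0 κ).shift (h ++ [t])).next = (κ (h ++ [t])).next := by
    funext l s
    simp only [Strategy.shift, compS, e, e2]
  cases hk : κ (h ++ [t]) with
  | mk n v =>
    rw [hk] at this
    simp only [Strategy.shift] at this ⊢
    congr

/-! ### Values of the cut game -/

theorem lowerValue_mem {A : Arena S} (hA : A.Wellformed) (pri : S → ℕ) {R : S → ℝ}
    (hR : ∀ s, R s ∈ Set.Icc (0:ℝ) 1) (s : S) : lowerValue A pri R s ∈ Set.Icc (0:ℝ) 1 := by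
  have := strategy_nonempty A Player.one
  have := strategy_nonempty A Player.two
  exact lower_mem fun a b => expReward_mem hA pri hR a b s

theorem upperValue_mem {A : Arena S} (hA : A.Wellformed) (pri : S → ℕ) {R : S → ℝ}
    (hR : ∀ s, R s ∈ Set.Icc (0:ℝ) 1) (s : S) : upperValue A pri R s ∈ Set.Icc (0:ℝ) 1 := by
  have := strategy_nonempty A Player.one
  have := strategy_nonempty A Player.two
  exact upper_mem fun a b => expReward_mem hA pri hR a b s

theorem lowerValue_le_upperValue {A : Arena S} (hA : A.Wellformed) (pri : S → ℕ) {R : S → ℝ}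
    (hR : ∀ s, R s ∈ Set.Icc (0:ℝ) 1) (s : S) : lowerValue A pri R s ≤ upperValue A pri R s := by
  have := strategy_nonempty A Player.one
  have := strategy_nonempty A Player.two
  exact lower_le_upper fun a b => expReward_mem hA pri hR a b s

theorem lower_cut {A A' : Arena S} {T : Set S} {nx : S → S} (hc : Cut A A' T nx)
    (pri pri' : S → ℕ) (R R' : S → ℝ) (hp : ∀ s, s ∉ T → pri' s = pri s)
    (hRR : ∀ s, s ∉ T → R' s = R s) (hR : ∀ s, R s ∈ Set.Icc (0:ℝ) 1)
    (hR' : ∀ s, R' s ∈ Set.Icc (0:ℝ) 1) (hT : ∀ t ∈ T, R' t = lowerValue A pri R (nx t)) (s : S) :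
    lowerValue A' pri' R' s = lowerValue A pri R s := by
  have := strategy_nonempty A Player.one
  have := strategy_nonempty A Player.two
  have := strategy_nonempty A' Player.one
  have := strategy_nonempty A' Player.two
  have hb := fun s a b => expReward_mem hc.wf pri hR a b s
  have hb' := fun s a b => expReward_mem hc.wf' pri' hR' a b s
  apply le_antisymm
  · refine le_of_forall_pos_le_add fun ε hε => ?_
    obtain ⟨τ1, hτ1⟩ := lower_exists (hb' s) (half_pos hε)
    have hκ : ∀ l : List S, ∃ κ : Strategy A Player.one, ∀ h t, l = h ++ [t] → t ∈ T →
        ∀ σ2, R' t - ε/2 ≤ expReward A pri R κ σ2 (nx t) := by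
      intro l
      obtain rfl | ⟨h, t, rfl⟩ := l.eq_nil_or_concat'
      · exact ⟨Classical.arbitrary _, fun h t e => by simp at e⟩
      · obtain ⟨κ, hκ⟩ := lower_exists (hb (nx t)) (half_pos hε)
        refine ⟨κ, fun h' t' e ht => ?_⟩
        have := List.append_inj' e rfl
        simp at this
        obtain ⟨_, rfl⟩ := this
        rw [hT t ht]; exact hκ
    choose κ hκ using hκ
    rw [← sub_le_iff_le_add]
    refine le_lower (hb s) (compS hc τ1 κ) fun σ2 => ?_
    have := compare hc pri pri' R R' hp hRR hR hR' (agree_comp hc τ1 κ) (agree_res hc σ2) s (-1) (ε/2)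
      (half_pos hε).le (by
        intro h t hh ht
        rw [shift_comp hc τ1 κ h t hh ht]
        have := hκ (h ++ [t]) h t rfl ht (σ2.shift (h ++ [t]))
        linarith)
    have h2 := hτ1 (resS hc σ2)
    change lowerValue A' pri' R' s - ε/2 ≤ _ at h2
    linarith
  · refine le_of_forall_pos_le_add fun ε hε => ?_
    refine lower_le (hb s) fun σ1 => ?_
    obtain ⟨τ2, hτ2⟩ := lower_resp (hb' s) (half_pos hε) (resS hc σ1)
    change _ ≤ lowerValue A' pri' R' s + ε/2 at hτ2
    have hκ : ∀ l : List S, ∃ κ : Strategy A Player.two, ∀ h t, l = h ++ [t] → t ∈ T →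
        expReward A pri R (σ1.shift l) κ (nx t) ≤ R' t + ε/2 := by
      intro l
      obtain rfl | ⟨h, t, rfl⟩ := l.eq_nil_or_concat'
      · exact ⟨Classical.arbitrary _, fun h t e => by simp at e⟩
      · obtain ⟨κ, hκ⟩ := lower_resp (hb (nx t)) (half_pos hε) (σ1.shift (h ++ [t]))
        refine ⟨κ, fun h' t' e ht => ?_⟩
        have := List.append_inj' e rfl
        simp at this
        obtain ⟨_, rfl⟩ := this
        rw [hT t ht]; exact hκ
    choose κ hκ using hκ
    refine ⟨compS hc τ2 κ, ?_⟩
    have := compare hc pri pri' R R' hp hRR hR hR' (agree_res hc σ1) (agree_comp hc τ2 κ) s 1 (ε/2)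
      (half_pos hε).le (by
        intro h t hh ht
        rw [shift_comp hc τ2 κ h t hh ht]
        have := hκ (h ++ [t]) h t rfl ht
        linarith)
    linarith

theorem upper_cut {A A' : Arena S} {T : Set S} {nx : S → S} (hc : Cut A A' T nx)
    (pri pri' : S → ℕ) (R R' : S → ℝ) (hp : ∀ s, s ∉ T → pri' s = pri s)
    (hRR : ∀ s, s ∉ T → R' s = R s) (hR : ∀ s, R s ∈ Set.Icc (0:ℝ) 1)
    (hR' : ∀ s, R' s ∈ Set.Icc (0:ℝ) 1) (hT : ∀ t ∈ T, R' t = upperValue A pri R (nx t)) (s : S) :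
    upperValue A' pri' R' s = upperValue A pri R s := by
  have := strategy_nonempty A Player.one
  have := strategy_nonempty A Player.two
  have := strategy_nonempty A' Player.one
  have := strategy_nonempty A' Player.two
  have hb := fun s a b => expReward_mem hc.wf pri hR a b s
  have hb' := fun s a b => expReward_mem hc.wf' pri' hR' a b s
  apply le_antisymm
  · refine le_of_forall_pos_le_add fun ε hε => ?_
    rw [← sub_le_iff_le_add]
    refine le_upper (hb s) fun σ2 => ?_
    obtain ⟨τ1, hτ1⟩ := upper_resp (hb' s) (half_pos hε) (resS hc σ2)
    change upperValue A' pri' R' s - ε/2 ≤ _ at hτ1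
    have hκ : ∀ l : List S, ∃ κ : Strategy A Player.one, ∀ h t, l = h ++ [t] → t ∈ T →
        R' t - ε/2 ≤ expReward A pri R κ (σ2.shift l) (nx t) := by
      intro l
      obtain rfl | ⟨h, t, rfl⟩ := l.eq_nil_or_concat'
      · exact ⟨Classical.arbitrary _, fun h t e => by simp at e⟩
      · obtain ⟨κ, hκ⟩ := upper_resp (hb (nx t)) (half_pos hε) (σ2.shift (h ++ [t]))
        refine ⟨κ, fun h' t' e ht => ?_⟩
        have := List.append_inj' e rfl
        simp at this
        obtain ⟨_, rfl⟩ := this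
        rw [hT t ht]; exact hκ
    choose κ hκ using hκ
    refine ⟨compS hc τ1 κ, ?_⟩
    have := compare hc pri pri' R R' hp hRR hR hR' (agree_comp hc τ1 κ) (agree_res hc σ2) s (-1) (ε/2)
      (half_pos hε).le (by
        intro h t hh ht
        rw [shift_comp hc τ1 κ h t hh ht]
        have := hκ (h ++ [t]) h t rfl ht
        linarith)
    linarith
  · refine le_of_forall_pos_le_add fun ε hε => ?_
    obtain ⟨τ2, hτ2⟩ := upper_exists (hb' s) (half_pos hε)
    have hκ : ∀ l : List S, ∃ κ : Strategy A Player.two, ∀ h t, l = h ++ [t] → t ∈ T →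
        ∀ σ1, expReward A pri R σ1 κ (nx t) ≤ R' t + ε/2 := by
      intro l
      obtain rfl | ⟨h, t, rfl⟩ := l.eq_nil_or_concat'
      · exact ⟨Classical.arbitrary _, fun h t e => by simp at e⟩
      · obtain ⟨κ, hκ⟩ := upper_exists (hb (nx t)) (half_pos hε)
        refine ⟨κ, fun h' t' e ht => ?_⟩
        have := List.append_inj' e rfl
        simp at this
        obtain ⟨_, rfl⟩ := this
        rw [hT t ht]; exact hκ
    choose κ hκ using hκ
    refine upper_le (hb s) (compS hc τ2 κ) fun σ1 => ?_
    have := compare hc pri pri' R R' hp hRR hR hR' (agree_res hc σ1) (agree_comp hc τ2 κ) s 1 (ε/2)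
      (half_pos hε).le (by
        intro h t hh ht
        rw [shift_comp hc τ2 κ h t hh ht]
        have := hκ (h ++ [t]) h t rfl ht (σ1.shift (h ++ [t]))
        linarith)
    have h2 := hτ2 (resS hc σ1)
    change _ ≤ upperValue A' pri' R' s + ε/2 at h2
    linarith

/-! ### The games of `G₁` and `μX.G₁` -/

section games
variable {L P : Type}

theorem bodyOf_none (G : pLmu L) (X : ℕ) (h : X ∉ G.binders) : G.bodyOf X = none := by
  induction G with
  | var Y => rfl
  | dia a G ih => exact ih h
  | box a G ih => exact ih h
  | or G H ihG ihH =>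
    simp only [pLmu.binders, List.mem_append, not_or] at h
    simp [pLmu.bodyOf, ihG h.1, ihH h.2]
  | and G H ihG ihH =>
    simp only [pLmu.binders, List.mem_append, not_or] at h
    simp [pLmu.bodyOf, ihG h.1, ihH h.2]
  | mu Y G ih =>
    simp only [pLmu.binders, List.mem_cons, not_or] at h
    simp [pLmu.bodyOf, ih h.2, Ne.symm h.1]
  | nu Y G ih =>
    simp only [pLmu.binders, List.mem_cons, not_or] at h
    simp [pLmu.bodyOf, ih h.2, Ne.symm h.1]

theorem varInfo_none (G : pLmu L) (X : ℕ) (h : X ∉ G.binders) (d : ℕ) : G.varInfo d X = none := by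
  induction G generalizing d with
  | var Y => rfl
  | dia a G ih => exact ih h _
  | box a G ih => exact ih h _
  | or G H ihG ihH =>
    simp only [pLmu.binders, List.mem_append, not_or] at h
    simp [pLmu.varInfo, ihG h.1, ihH h.2]
  | and G H ihG ihH =>
    simp only [pLmu.binders, List.mem_append, not_or] at h
    simp [pLmu.varInfo, ihG h.1, ihH h.2]
  | mu Y G ih =>
    simp only [pLmu.binders, List.mem_cons, not_or] at h
    simp [pLmu.varInfo, ih h.2, Ne.symm h.1]
  | nu Y G ih =>
    simp only [pLmu.binders, List.mem_cons, not_or] at h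
    simp [pLmu.varInfo, ih h.2, Ne.symm h.1]

theorem varInfo_shift (G : pLmu L) (X d : ℕ) :
    G.varInfo (d+1) X = (G.varInfo d X).map (fun p => (p.1 + 1, p.2)) := by
  induction G generalizing d with
  | var Y => rfl
  | dia a G ih => exact ih _
  | box a G ih => exact ih _
  | or G H ihG ihH =>
    simp only [pLmu.varInfo]
    rw [ihG, ihH]
    cases pLmu.varInfo G (d+1) X <;> simp
  | and G H ihG ihH =>
    simp only [pLmu.varInfo]
    rw [ihG, ihH]
    cases pLmu.varInfo G (d+1) X <;> simp
  | mu Y G ih =>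
    simp only [pLmu.varInfo]
    split_ifs
    · rfl
    · exact ih _
  | nu Y G ih =>
    simp only [pLmu.varInfo]
    split_ifs
    · rfl
    · exact ih _

theorem game_wf (M : PLTS L P) (F : pLmu L) : (gameArena M F).Wellformed := by
  rintro ⟨p | d, G⟩ ho
  · exfalso
    cases G with
    | var X =>
      simp only [gameArena] at ho
      split at ho <;> simp at ho
    | dia a G => simp [gameArena] at ho
    | box a G => simp [gameArena] at ho
    | or G H => simp [gameArena] at ho
    | and G H => simp [gameArena] at ho
    | mu X G => simp [gameArena] at ho
    | nu X G => simp [gameArena] at ho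
  · have hinj : Function.Injective (fun q : P => ((Sum.inl q : P ⊕ PDist P), G)) := by
      intro a b h; simpa using h
    have h0 : ∀ t, t ∉ Set.range (fun q : P => ((Sum.inl q : P ⊕ PDist P), G)) →
        (gameArena M F).prob (Sum.inr d, G) t = 0 := by
      rintro ⟨q | e, G'⟩ ht
      · have : G' ≠ G := by rintro rfl; exact ht ⟨q, rfl⟩
        simp [gameArena, this]
      · simp [gameArena]
    have h1 : ∀ q, (gameArena M F).prob (Sum.inr d, G) (Sum.inl q, G) = d.f q := by
      intro q; simp [gameArena]
    refine ⟨?_, ?_, ?_⟩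
    · intro t
      by_cases ht : t ∈ Set.range (fun q : P => ((Sum.inl q : P ⊕ PDist P), G))
      · obtain ⟨q, rfl⟩ := ht
        rw [h1]; exact d.nonneg q
      · rw [h0 t ht]
    · rw [← hinj.hasSum_iff h0]
      have : (gameArena M F).prob (Sum.inr d, G) ∘ (fun q : P => ((Sum.inl q : P ⊕ PDist P), G)) = d.f :=
        funext h1
      rw [this]; exact d.sum_one
    · ext t
      constructor
      · rintro ⟨q, hq, rfl⟩
        change (gameArena M F).prob (Sum.inr d, G) (Sum.inl q, G) ≠ 0
        rw [h1]; exact hq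
      · intro ht
        by_cases htr : t ∈ Set.range (fun q : P => ((Sum.inl q : P ⊕ PDist P), G))
        · obtain ⟨q, rfl⟩ := htr
          refine ⟨q, ?_, rfl⟩
          change (gameArena M F).prob (Sum.inr d, G) (Sum.inl q, G) ≠ 0 at ht
          rwa [h1] at ht
        · exact absurd (h0 t htr) ht

/-- the states `⟨q, X⟩` -/
def TX (L P : Type) (X : ℕ) : Set (GState L P) := {s | ∃ q : P, s = (Sum.inl q, pLmu.var X)}

theorem not_TX {X Y : ℕ} {q : P} (h : ((Sum.inl q, pLmu.var Y) : GState L P) ∉ TX L P X) : X ≠ Y := by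
  rintro rfl
  exact h ⟨q, rfl⟩

theorem game_cut (M : PLTS L P) (G₁ : pLmu L) (X : ℕ) (hX : X ∉ G₁.binders) :
    Cut (gameArena M (pLmu.mu X G₁)) (gameArena M G₁) (TX L P X) (fun s => (s.1, G₁)) where
  wf := game_wf _ _
  wf' := game_wf _ _
  term := by
    rintro _ ⟨q, rfl⟩
    simp [gameArena, bodyOf_none G₁ X hX]
  single := by
    rintro _ ⟨q, rfl⟩
    simp [gameArena, pLmu.bodyOf]
  off := by
    rintro ⟨p | d, G⟩ hs
    · cases G with
      | var Y =>
        have := not_TX hs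
        simp [gameArena, pLmu.bodyOf, this]
      | _ => rfl
    · rfl
  owner := by
    rintro ⟨p | d, G⟩
    · cases G with
      | var Y =>
        by_cases h : X = Y
        · subst h
          simp [gameArena, pLmu.varInfo, varInfo_none G₁ X hX]
        · simp only [gameArena, pLmu.varInfo, if_neg h, varInfo_shift G₁ Y 0]
          rcases pLmu.varInfo G₁ 0 Y with _ | ⟨d, _ | _⟩ <;> rfl
      | _ => rfl
    · rfl
  prob := fun s t => rfl

theorem game_pri (G₁ : pLmu L) (X : ℕ) (s : GState L P) (hs : s ∉ TX L P X) :
    gamePri G₁ s = gamePri (pLmu.mu X G₁) s := by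
  obtain ⟨p | d, G⟩ := s
  · cases G with
    | var Y =>
      have h := not_TX hs
      simp only [gamePri, pLmu.varInfo, if_neg h, varInfo_shift G₁ Y 0, pLmu.size]
      rcases pLmu.varInfo G₁ 0 Y with _ | ⟨d, _ | _⟩
      · rfl
      · simp
      · simp
    | _ => rfl
  · rfl

theorem game_R (G₁ : pLmu L) (X : ℕ) (ρ : ℕ → P → unitInterval) (f : P → unitInterval)
    (s : GState L P) (hs : s ∉ TX L P X) :
    gameR G₁ (Function.update ρ X f) s = gameR (pLmu.mu X G₁) ρ s := by
  obtain ⟨p | d, G⟩ := s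
  · cases G with
    | var Y =>
      have h := not_TX hs
      simp [gameR, Function.update_of_ne h.symm]
    | _ => rfl
  · rfl

theorem gameR_mem (F : pLmu L) (ρ : ℕ → P → unitInterval) (s : GState L P) :
    gameR F ρ s ∈ Set.Icc (0:ℝ) 1 := by
  obtain ⟨p | d, G⟩ := s
  · cases G with
    | var Y => exact (ρ Y p).2
    | _ => simp [gameR]
  · simp [gameR]

end games

/-- **Under the inductive hypothesis of the μ-case, the game values of the unfolded
game are fixed points**: assuming the equivalence of denotational and game semantics
for the body `G₁` under every interpretation, the functions
`⦅μX.G₁⦆⋆_ρ : p ↦ Val⋆(𝒢^{μX.G₁}_ρ)(⟨p, G₁⟩)` (for `⋆ ∈ {↓, ↑}`) take values in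
`[0,1]` and, viewed as elements of `P → [0,1]`, are fixed points of the map
`f ↦ ⟦G₁⟧ρ[f/X]`; consequently `⟦μX.G₁⟧ρ(p) ≤ ⦅μX.G₁⦆↓_ρ(p) ≤ ⦅μX.G₁⦆↑_ρ(p)`
for every `p`. -/
theorem mu_case_game_values_are_fixed_points {L P : Type} [Countable L]
    (M : PLTS L P) (G₁ : pLmu L) (X : ℕ) (hF : (pLmu.mu X G₁).NormalForm)
    (IH : ∀ (ρ' : ℕ → P → unitInterval) (q : P),
      (pLmu.sem M G₁ ρ' q : ℝ) =
          lowerValue (gameArena M G₁) (gamePri G₁) (gameR G₁ ρ') (Sum.inl q, G₁) ∧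
        lowerValue (gameArena M G₁) (gamePri G₁) (gameR G₁ ρ') (Sum.inl q, G₁) =
          upperValue (gameArena M G₁) (gamePri G₁) (gameR G₁ ρ') (Sum.inl q, G₁))
    (ρ : ℕ → P → unitInterval) :
    (∀ p, lowerValue (gameArena M (pLmu.mu X G₁)) (gamePri (pLmu.mu X G₁))
        (gameR (pLmu.mu X G₁) ρ) (Sum.inl p, G₁) ∈ Set.Icc (0:ℝ) 1) ∧
    (∀ p, upperValue (gameArena M (pLmu.mu X G₁)) (gamePri (pLmu.mu X G₁))
        (gameR (pLmu.mu X G₁) ρ) (Sum.inl p, G₁) ∈ Set.Icc (0:ℝ) 1) ∧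
    pLmu.sem M G₁ (Function.update ρ X (fun p => Set.projIcc 0 1 zero_le_one
        (lowerValue (gameArena M (pLmu.mu X G₁)) (gamePri (pLmu.mu X G₁))
          (gameR (pLmu.mu X G₁) ρ) (Sum.inl p, G₁)))) =
      (fun p => Set.projIcc 0 1 zero_le_one
        (lowerValue (gameArena M (pLmu.mu X G₁)) (gamePri (pLmu.mu X G₁))
          (gameR (pLmu.mu X G₁) ρ) (Sum.inl p, G₁))) ∧
    pLmu.sem M G₁ (Function.update ρ X (fun p => Set.projIcc 0 1 zero_le_one
        (upperValue (gameArena M (pLmu.mu X G₁)) (gamePri (pLmu.mu X G₁))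
          (gameR (pLmu.mu X G₁) ρ) (Sum.inl p, G₁)))) =
      (fun p => Set.projIcc 0 1 zero_le_one
        (upperValue (gameArena M (pLmu.mu X G₁)) (gamePri (pLmu.mu X G₁))
          (gameR (pLmu.mu X G₁) ρ) (Sum.inl p, G₁))) ∧
    ∀ p, (pLmu.sem M (pLmu.mu X G₁) ρ p : ℝ) ≤
          lowerValue (gameArena M (pLmu.mu X G₁)) (gamePri (pLmu.mu X G₁))
            (gameR (pLmu.mu X G₁) ρ) (Sum.inl p, G₁) ∧
        lowerValue (gameArena M (pLmu.mu X G₁)) (gamePri (pLmu.mu X G₁))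
            (gameR (pLmu.mu X G₁) ρ) (Sum.inl p, G₁) ≤
          upperValue (gameArena M (pLmu.mu X G₁)) (gamePri (pLmu.mu X G₁))
            (gameR (pLmu.mu X G₁) ρ) (Sum.inl p, G₁) := by
  have hX : X ∉ G₁.binders := (List.nodup_cons.1 hF.1).1
  have hc := game_cut M G₁ X hX
  have hR := gameR_mem (pLmu.mu X G₁) ρ
  have m1 := lowerValue_mem (game_wf M (pLmu.mu X G₁)) (gamePri (pLmu.mu X G₁)) hR
  have m2 := upperValue_mem (game_wf M (pLmu.mu X G₁)) (gamePri (pLmu.mu X G₁)) hR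
  have f1 : pLmu.sem M G₁ (Function.update ρ X (fun p => Set.projIcc 0 1 zero_le_one
        (lowerValue (gameArena M (pLmu.mu X G₁)) (gamePri (pLmu.mu X G₁))
          (gameR (pLmu.mu X G₁) ρ) (Sum.inl p, G₁)))) =
      (fun p => Set.projIcc 0 1 zero_le_one
        (lowerValue (gameArena M (pLmu.mu X G₁)) (gamePri (pLmu.mu X G₁))
          (gameR (pLmu.mu X G₁) ρ) (Sum.inl p, G₁))) := by
    funext q
    apply Subtype.ext
    rw [(IH _ q).1, Set.projIcc_of_mem zero_le_one (m1 (Sum.inl q, G₁))]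
    refine lower_cut hc _ _ _ _ (game_pri G₁ X) (game_R G₁ X ρ _) hR (gameR_mem _ _) ?_ _
    rintro _ ⟨p, rfl⟩
    simp only [gameR, Function.update_self]
    rw [Set.projIcc_of_mem zero_le_one (m1 (Sum.inl p, G₁))]
  have f2 : pLmu.sem M G₁ (Function.update ρ X (fun p => Set.projIcc 0 1 zero_le_one
        (upperValue (gameArena M (pLmu.mu X G₁)) (gamePri (pLmu.mu X G₁))
          (gameR (pLmu.mu X G₁) ρ) (Sum.inl p, G₁)))) =
      (fun p => Set.projIcc 0 1 zero_le_one
        (upperValue (gameArena M (pLmu.mu X G₁)) (gamePri (pLmu.mu X G₁))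
          (gameR (pLmu.mu X G₁) ρ) (Sum.inl p, G₁))) := by
    funext q
    apply Subtype.ext
    rw [(IH _ q).1, (IH _ q).2, Set.projIcc_of_mem zero_le_one (m2 (Sum.inl q, G₁))]
    refine upper_cut hc _ _ _ _ (game_pri G₁ X) (game_R G₁ X ρ _) hR (gameR_mem _ _) ?_ _
    rintro _ ⟨p, rfl⟩
    simp only [gameR, Function.update_self]
    rw [Set.projIcc_of_mem zero_le_one (m2 (Sum.inl p, G₁))]
  refine ⟨fun p => m1 _, fun p => m2 _, f1, f2, fun p => ⟨?_, ?_⟩⟩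
  · have h : pLmu.sem M (pLmu.mu X G₁) ρ ≤ (fun p => Set.projIcc 0 1 zero_le_one
        (lowerValue (gameArena M (pLmu.mu X G₁)) (gamePri (pLmu.mu X G₁))
          (gameR (pLmu.mu X G₁) ρ) (Sum.inl p, G₁))) := by
      have : pLmu.sem M (pLmu.mu X G₁) ρ =
          sInf {g : P → unitInterval | pLmu.sem M G₁ (Function.update ρ X g) ≤ g} := by
        funext q; rfl
      rw [this]
      exact sInf_le f1.le
    have h2 := Subtype.coe_le_coe.2 (h p)
    beta_reduce at h2
    rwa [Set.projIcc_of_mem zero_le_one (m1 (Sum.inl p, G₁))] at h2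
  · exact lowerValue_le_upperValue (game_wf M (pLmu.mu X G₁)) _ hR _
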